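/- arXiv:1211.1054 — 4 statements merged into one kernel-verified Lean document; each statement's English description precedes it below -/
import Mathlib

section
/- Let δ > 1/2. There exists a constant C₀ > 0, depending only on δ, with the following property: for every τ ∈ ℝ with |τ| ≥ 1, every μ ≥ 0 with τ² ≠ μ, and every Schwartz function f : ℝ → ℂ, there exists a twice continuously differentiable function r : ℝ → ℂ satisfying −r''(x) + 2τ r'(x) + (μ − τ²) r(x) = f(x) for all x ∈ ℝ, together with the weighted estimates ∫_ℝ (1+x²)^{−δ} |r(x)|² dx ≤ (C₀²/τ²) ∫_ℝ (1+x²)^{δ} |f(x)|² dx and ∫_ℝ (1+x²)^{−δ} |r'(x)|² dx ≤ C₀² ∫_ℝ (1+x²)^{δ} |f(x)|² dx; moreover r is the unique twice continuously differentiable solution of this equation with ∫_ℝ (1+x²)^{−δ} |r(x)|² dx < ∞. -/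
open MeasureTheory

/-!
If `a + b = 2τ` and `ab = τ² - μ`, the operator is `-(D - a)(D - b)`, so `r` is obtained from `-f`
by applying the resolvents of `D` at the real points `a` and `b`, where `1 ≤ |τ| ≤ |a|` but `b` may
be arbitrarily close to `0`. A resolvent is `-1 / a` times an exponential average of translates at
distance of order `1 / |a|`; translations act on `L²_s` with polynomially growing norm, so the
resolvent at `a` has norm `O(1 / |a|)` on every `L²_s`. The resolvent at `b` has kernel bounded by
`1`, hence maps `L¹` to `L∞` uniformly in `b`, and `L²_δ ⊆ L¹`, `L∞ ⊆ L²_{-δ}` because `δ > 1/2`.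
This also bounds `r' = b r + u`, with `u` the intermediate function, as `|b| ≤ |a|`.

For uniqueness, `k = (D - b) h` is a multiple of `e^{ax}` when `(D - a)(D - b) h = 0`. The increment
of `e^{-bσ} h(x + σ)` over `0 ≤ σ ≤ 1` is a positive multiple of `k(x)`, so `k` lies in `L²_{-δ}`
together with `h`. But a nonzero real exponential lies in no `L²_s`, since translating it multiplies
its norm by an exponential factor.
-/

open Set Filter Asymptotics ProbabilityTheory

section Weights

variable {E : Type*} [NormedAddCommGroup E]

lemma one_add_add_sq_le_mul (x t : ℝ) : 1 + (x + t) ^ 2 ≤ 2 * (1 + t ^ 2) * (1 + x ^ 2) := by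
  nlinarith [sq_nonneg (x - t), sq_nonneg (t * x)]

lemma one_add_sq_rpow_le_mul (s x t : ℝ) :
    (1 + x ^ 2) ^ s ≤ (2 * (1 + t ^ 2)) ^ |s| * (1 + (x + t) ^ 2) ^ s := by
  rcases le_total 0 s with hs | hs
  · rw [abs_of_nonneg hs, ← Real.mul_rpow (by positivity) (by positivity)]
    gcongr
    simpa using one_add_add_sq_le_mul (x + t) (-t)
  · rw [abs_of_nonpos hs, Real.rpow_neg (by positivity), inv_mul_eq_div,
      ← Real.div_rpow (by positivity) (by positivity)]
    refine Real.rpow_le_rpow_of_nonpos (by positivity) ?_ hs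
    exact div_le_of_le_mul₀ (by positivity) (by positivity)
      ((one_add_add_sq_le_mul x t).trans_eq (mul_comm _ _))

lemma isLittleO_one_add_sq_rpow_exp {s b : ℝ} (hs : 0 ≤ s) (hb : 0 < b) :
    (fun t : ℝ => (2 * (1 + t ^ 2)) ^ s) =o[atTop] fun t => Real.exp (b * t) := by
  have hquad : (fun t : ℝ => 2 * (1 + t ^ 2)) =O[atTop] fun t => t ^ 2 := by
    refine IsBigO.of_bound 4 (eventually_ge_atTop 1 |>.mono fun t ht => ?_)
    rw [Real.norm_of_nonneg (by positivity), Real.norm_of_nonneg (by positivity)]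
    nlinarith
  have hpow : (fun t : ℝ => (t ^ 2) ^ s) =ᶠ[atTop] fun t => t ^ (2 * s) :=
    eventually_ge_atTop 0 |>.mono fun t ht => by
      simp only [Real.rpow_mul ht, Real.rpow_two]
  exact ((hquad.rpow hs (.of_forall fun t => sq_nonneg t)).congr' .rfl hpow).trans_isLittleO
    (isLittleO_rpow_exp_pos_mul_atTop (2 * s) hb)

lemma exists_one_add_sq_rpow_lt_exp {s a : ℝ} (hs : 0 ≤ s) (ha : a ≠ 0) :
    ∃ t : ℝ, (2 * (1 + t ^ 2)) ^ s < Real.exp (a * t) := by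
  obtain ⟨u, hu⟩ := ((isLittleO_one_add_sq_rpow_exp hs (abs_pos.2 ha)).def one_half_pos).exists
  rw [Real.norm_of_nonneg (by positivity), Real.norm_of_nonneg (by positivity)] at hu
  refine ⟨|a| / a * u, ?_⟩
  have hsq : (|a| / a * u) ^ 2 = u ^ 2 := by
    rw [mul_pow, div_pow, sq_abs, div_self (by positivity), one_mul]
  rw [hsq, ← mul_assoc a, mul_div_cancel₀ _ ha]
  linarith [Real.exp_pos (|a| * u)]

/-- The measure `(1 + x²)^s dx` on the line. The weighted space `L²_s` is `L²` of this measure, so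
that `‖g‖_{L²_s}` is `eLpNorm g 2 (bracketMeasure s)`. -/
noncomputable def bracketMeasure (s : ℝ) : Measure ℝ :=
  volume.withDensity fun x => ENNReal.ofReal ((1 + x ^ 2) ^ s)

lemma lintegral_bracketMeasure (s : ℝ) (φ : ℝ → ENNReal) :
    ∫⁻ x, φ x ∂bracketMeasure s = ∫⁻ x, ENNReal.ofReal ((1 + x ^ 2) ^ s) * φ x :=
  lintegral_withDensity_eq_lintegral_mul_non_measurable _ (by fun_prop)
    (.of_forall fun _ => ENNReal.ofReal_lt_top) φ

instance (s : ℝ) : SFinite (bracketMeasure s) :=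
  inferInstanceAs (SFinite (volume.withDensity _))

lemma bracketMeasure_absolutelyContinuous (s : ℝ) : bracketMeasure s ≪ volume :=
  withDensity_absolutelyContinuous _ _

lemma absolutelyContinuous_bracketMeasure (s : ℝ) : volume ≪ bracketMeasure s :=
  withDensity_absolutelyContinuous' (by fun_prop)
    (.of_forall fun x => (ENNReal.ofReal_pos.mpr (by positivity)).ne')

lemma bracketMeasure_mono {s t : ℝ} (h : s ≤ t) : bracketMeasure s ≤ bracketMeasure t :=
  withDensity_mono (.of_forall fun x => by
    dsimp only
    gcongr
    nlinarith [sq_nonneg x])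

lemma isFiniteMeasure_bracketMeasure {s : ℝ} (hs : s < -(1 / 2)) :
    IsFiniteMeasure (bracketMeasure s) := by
  have hint : Integrable fun x : ℝ => (1 + ‖x‖ ^ 2) ^ (-(-2 * s) / 2) :=
    integrable_rpow_neg_one_add_norm_sq (by simp; linarith)
  refine isFiniteMeasure_withDensity_ofReal (hint.congr (.of_forall fun x => ?_)).hasFiniteIntegral
  simp [show 2 * s / 2 = s by ring]

lemma eLpNorm_two_sq {α : Type*} [MeasurableSpace α] (μ : Measure α) (g : α → E) :
    eLpNorm g 2 μ ^ 2 = ∫⁻ x, ‖g x‖ₑ ^ 2 ∂μ := by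
  simpa using eLpNorm_nnreal_pow_eq_lintegral (f := g) (μ := μ) (two_ne_zero : (2 : NNReal) ≠ 0)

lemma eLpNorm_two_bracketMeasure_sq (s : ℝ) (g : ℝ → E) :
    eLpNorm g 2 (bracketMeasure s) ^ 2 =
      ∫⁻ x : ℝ, ENNReal.ofReal ((1 + x ^ 2) ^ s * ‖g x‖ ^ 2) := by
  rw [eLpNorm_two_sq, lintegral_bracketMeasure]
  congr with x
  rw [ENNReal.ofReal_mul (by positivity), ENNReal.ofReal_pow (norm_nonneg _), ofReal_norm]

lemma memLp_two_bracketMeasure_iff {s : ℝ} {g : ℝ → E} (hg : Continuous g) :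
    MemLp g 2 (bracketMeasure s) ↔
      ∫⁻ x : ℝ, ENNReal.ofReal ((1 + x ^ 2) ^ s * ‖g x‖ ^ 2) < ⊤ := by
  rw [← eLpNorm_two_bracketMeasure_sq, MemLp, and_iff_right hg.aestronglyMeasurable]
  simp

lemma lintegral_le_of_eLpNorm_two_bracketMeasure_le {F : Type*} [NormedAddCommGroup F]
    {s t c : ℝ} (hc : 0 ≤ c) {g : ℝ → E} {f : ℝ → F}
    (h : eLpNorm g 2 (bracketMeasure s) ≤ ENNReal.ofReal c * eLpNorm f 2 (bracketMeasure t)) :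
    ∫⁻ x : ℝ, ENNReal.ofReal ((1 + x ^ 2) ^ s * ‖g x‖ ^ 2) ≤
      ENNReal.ofReal (c ^ 2) * ∫⁻ x : ℝ, ENNReal.ofReal ((1 + x ^ 2) ^ t * ‖f x‖ ^ 2) := by
  rw [← eLpNorm_two_bracketMeasure_sq, ← eLpNorm_two_bracketMeasure_sq, ENNReal.ofReal_pow hc,
    ← mul_pow]
  gcongr

lemma lintegral_comp_add_bracketMeasure_le (s t : ℝ) (φ : ℝ → ENNReal) :
    ∫⁻ x, φ (x + t) ∂bracketMeasure s ≤
      ENNReal.ofReal ((2 * (1 + t ^ 2)) ^ |s|) * ∫⁻ x, φ x ∂bracketMeasure s := by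
  simp only [lintegral_bracketMeasure]
  calc ∫⁻ x, ENNReal.ofReal ((1 + x ^ 2) ^ s) * φ (x + t)
      ≤ ∫⁻ x, ENNReal.ofReal ((2 * (1 + t ^ 2)) ^ |s|) *
          (ENNReal.ofReal ((1 + (x + t) ^ 2) ^ s) * φ (x + t)) := by
        refine lintegral_mono fun x => ?_
        dsimp only
        rw [← mul_assoc, ← ENNReal.ofReal_mul (by positivity)]
        gcongr
        exact one_add_sq_rpow_le_mul s x t
    _ = _ := by
        rw [lintegral_const_mul' _ _ ENNReal.ofReal_ne_top,
          lintegral_add_right_eq_self (fun x => ENNReal.ofReal ((1 + x ^ 2) ^ s) * φ x) t]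

lemma memLp_comp_add_bracketMeasure {s : ℝ} {g : ℝ → E} (hg : Continuous g)
    (h : MemLp g 2 (bracketMeasure s)) (t : ℝ) :
    MemLp (fun x => g (x + t)) 2 (bracketMeasure s) := by
  refine ⟨by fun_prop, ?_⟩
  have hsq : eLpNorm (fun x => g (x + t)) 2 (bracketMeasure s) ^ 2 < ⊤ := by
    rw [eLpNorm_two_sq]
    refine (lintegral_comp_add_bracketMeasure_le s t fun x => ‖g x‖ₑ ^ 2).trans_lt ?_
    rw [← eLpNorm_two_sq]
    exact ENNReal.mul_lt_top ENNReal.ofReal_lt_top (ENNReal.pow_lt_top h.2)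
  simpa using hsq

lemma eLpNorm_one_le_eLpNorm_two_bracketMeasure [NormedSpace ℝ E] (s : ℝ) {g : ℝ → E}
    (hg : AEStronglyMeasurable g) :
    eLpNorm g 1 ≤
      eLpNorm g 2 (bracketMeasure s) * bracketMeasure (-s) univ ^ (1 / 2 : ℝ) := by
  let G : ℝ → E := fun x => (1 + x ^ 2) ^ s • g x
  have hG : AEStronglyMeasurable G :=
    (by fun_prop : Measurable fun x : ℝ => (1 + x ^ 2) ^ s).aestronglyMeasurable.smul hg
  have hW (x : ℝ) :
      ENNReal.ofReal ((1 + x ^ 2) ^ (-s)) * ENNReal.ofReal ((1 + x ^ 2) ^ s) = 1 := by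
    rw [← ENNReal.ofReal_mul (by positivity), ← Real.rpow_add (by positivity)]
    simp
  have h₁ : eLpNorm G 1 (bracketMeasure (-s)) = eLpNorm g 1 := by
    rw [eLpNorm_one_eq_lintegral_enorm, eLpNorm_one_eq_lintegral_enorm, lintegral_bracketMeasure]
    congr with x
    rw [enorm_smul, Real.enorm_of_nonneg (by positivity), ← mul_assoc, hW, one_mul]
  have h₂ : eLpNorm G 2 (bracketMeasure (-s)) = eLpNorm g 2 (bracketMeasure s) := by
    apply (ENNReal.pow_right_strictMono two_ne_zero).injective
    dsimp only
    rw [eLpNorm_two_sq, eLpNorm_two_sq, lintegral_bracketMeasure, lintegral_bracketMeasure]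
    congr with x
    rw [enorm_smul, Real.enorm_of_nonneg (by positivity), mul_pow, sq (ENNReal.ofReal _), mul_assoc,
      ← mul_assoc, hW, one_mul]
  have key := eLpNorm_le_eLpNorm_mul_rpow_measure_univ one_le_two
    (hG.mono_ac (bracketMeasure_absolutelyContinuous (-s)))
  rw [h₁, h₂] at key
  norm_num at key ⊢
  exact key

lemma integrable_of_memLp_bracketMeasure [NormedSpace ℝ E] {s : ℝ} (hs : 1 / 2 < s) {g : ℝ → E}
    (h : MemLp g 2 (bracketMeasure s)) : Integrable g := by
  have := isFiniteMeasure_bracketMeasure (neg_lt_neg hs)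
  have hg : AEStronglyMeasurable g := h.1.mono_ac (absolutelyContinuous_bracketMeasure s)
  rw [← memLp_one_iff_integrable]
  refine ⟨hg, (eLpNorm_one_le_eLpNorm_two_bracketMeasure s hg).trans_lt ?_⟩
  exact ENNReal.mul_lt_top h.2 (by finiteness)

lemma one_add_norm_rpow_neg_le {r : ℝ} (hr : 0 ≤ r) (x : ℝ) :
    (1 + ‖x‖) ^ (-r) ≤ (1 + x ^ 2) ^ (-r / 2) := by
  calc (1 + ‖x‖) ^ (-r) = ((1 + ‖x‖) ^ 2) ^ (-r / 2) := by
        rw [← Real.rpow_two, ← Real.rpow_mul (by positivity)]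
        ring_nf
    _ ≤ (1 + x ^ 2) ^ (-r / 2) := by
        refine Real.rpow_le_rpow_of_nonpos (by positivity) ?_ (by linarith)
        nlinarith [norm_nonneg x, sq_abs x, Real.norm_eq_abs x]

instance hasTemperateGrowth_bracketMeasure (s : ℝ) :
    (bracketMeasure s).HasTemperateGrowth := by
  obtain ⟨n, hn⟩ := exists_nat_ge (2 * s + 2)
  have := isFiniteMeasure_bracketMeasure (s := -1) (by norm_num)
  have decay (x : ℝ) : (1 + x ^ 2) ^ s * (1 + ‖x‖) ^ (-n : ℝ) ≤ (1 + x ^ 2) ^ (-1 : ℝ) := by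
    calc (1 + x ^ 2) ^ s * (1 + ‖x‖) ^ (-n : ℝ)
        ≤ (1 + x ^ 2) ^ s * (1 + x ^ 2) ^ (-n / 2 : ℝ) := by
          gcongr
          exact one_add_norm_rpow_neg_le n.cast_nonneg x
      _ = (1 + x ^ 2) ^ (s - n / 2) := by
          rw [← Real.rpow_add (by positivity)]; ring_nf
      _ ≤ (1 + x ^ 2) ^ (-1 : ℝ) := by
          gcongr
          · nlinarith [sq_nonneg x]
          · linarith
  refine ⟨n, (by fun_prop : Measurable _).aestronglyMeasurable, ?_⟩
  rw [hasFiniteIntegral_iff_enorm, lintegral_bracketMeasure]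
  calc ∫⁻ x : ℝ, ENNReal.ofReal ((1 + x ^ 2) ^ s) * ‖(1 + ‖x‖) ^ (-n : ℝ)‖ₑ
      ≤ ∫⁻ x : ℝ, ENNReal.ofReal ((1 + x ^ 2) ^ (-1 : ℝ)) * 1 := by
        refine lintegral_mono fun x => ?_
        dsimp only
        rw [Real.enorm_of_nonneg (by positivity), ← ENNReal.ofReal_mul (by positivity), mul_one]
        exact ENNReal.ofReal_le_ofReal (decay x)
    _ = bracketMeasure (-1) univ := by
        rw [← lintegral_bracketMeasure, lintegral_one]
    _ < ⊤ := measure_lt_top _ _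

end Weights

section Resolvent

variable {E : Type*} [NormedAddCommGroup E] [NormedSpace ℝ E]

lemma expMeasure_one_eq : expMeasure 1 =
    (volume.restrict (Ioi 0)).withDensity fun t => ENNReal.ofReal (Real.exp (-t)) := by
  have hpdf : gammaPDF 1 1 = (Ici 0).indicator fun t => ENNReal.ofReal (Real.exp (-t)) := by
    ext t
    by_cases ht : 0 ≤ t <;> simp [gammaPDF, gammaPDFReal, ht]
  rw [expMeasure, gammaMeasure, hpdf, withDensity_indicator measurableSet_Ici,
    restrict_Ioi_eq_restrict_Ici]

lemma expMeasure_one_le_volume : expMeasure 1 ≤ volume := by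
  rw [expMeasure_one_eq]
  refine (withDensity_mono ?_).trans (withDensity_one.trans_le Measure.restrict_le_self)
  filter_upwards [ae_restrict_mem measurableSet_Ioi] with t ht
  simpa using le_of_lt ht

lemma integral_expMeasure_one (φ : ℝ → E) :
    ∫ t, φ t ∂expMeasure 1 = ∫ t in Ioi 0, Real.exp (-t) • φ t := by
  rw [expMeasure_one_eq, integral_withDensity_eq_integral_toReal_smul (by fun_prop)
    (.of_forall fun _ => ENNReal.ofReal_lt_top)]
  simp only [ENNReal.toReal_ofReal (Real.exp_nonneg _)]

/-- The bounded solution `u` of `u' = a u + g`, that is `(d/dx - a)⁻¹ g`. With the integration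
variable scaled by `1 / a`, the solution `-∫₀^∞ e^{-as} g(x+s) ds` for `a > 0` and the solution
`∫₋∞⁰ e^{-as} g(x+s) ds` for `a < 0` become the same exponential average of translates of `g`.
The value at `a = 0` is `0`, since `0⁻¹ = 0`. -/
noncomputable def expResolvent (a : ℝ) (g : ℝ → E) (x : ℝ) : E :=
  -a⁻¹ • ∫ t, g (x + t / a) ∂expMeasure 1

lemma expResolvent_eq_smul_integral_Ioi {a : ℝ} (ha : a ≠ 0) (g : ℝ → E) (x : ℝ) :
    expResolvent a g x =
      -a⁻¹ • Real.exp (a * x) • ∫ z in Ioi (a * x), Real.exp (-z) • g (z / a) := by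
  have hshift : ∫ z in Ioi (a * x), Real.exp (-z) • g (z / a) =
      ∫ t in Ioi 0, Real.exp (-(t + a * x)) • g ((t + a * x) / a) := by
    have := (measurePreserving_add_right volume (a * x)).setIntegral_preimage_emb
      (measurableEmbedding_addRight _) (fun z => Real.exp (-z) • g (z / a)) (Ioi (a * x))
    simpa using this.symm
  rw [expResolvent, integral_expMeasure_one, hshift]
  congr 1
  rw [← integral_smul]
  congr with t
  rw [smul_smul, ← Real.exp_add]
  congr 2
  · ring
  · field_simp
    ring

lemma hasDerivAt_integral_Ioi [CompleteSpace E] {φ : ℝ → E} (hφ : Continuous φ)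
    (hφi : ∀ c, IntegrableOn φ (Ioi c)) (y : ℝ) :
    HasDerivAt (fun y => ∫ z in Ioi y, φ z) (-φ y) y := by
  have hsplit : (fun y => ∫ z in Ioi y, φ z) =
      fun y => (∫ z in Ioi 0, φ z) - ∫ z in 0..y, φ z := by
    funext y
    rw [← intervalIntegral.integral_interval_add_Ioi (hφi 0) (hφi y)]
    simp
  rw [hsplit]
  simpa using (hφ.integral_hasStrictDerivAt 0 y).hasDerivAt.const_sub (∫ z in Ioi 0, φ z)

lemma integrableOn_exp_neg_smul {φ : ℝ → E} (hφ : Integrable φ) (c : ℝ) :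
    IntegrableOn (fun z => Real.exp (-z) • φ z) (Ioi c) := by
  refine hφ.integrableOn.bdd_smul (Real.exp (-c)) (by fun_prop) ?_
  filter_upwards [ae_restrict_mem measurableSet_Ioi] with z hz
  rw [Real.norm_of_nonneg (Real.exp_nonneg _)]
  gcongr
  exact le_of_lt hz

lemma hasDerivAt_exp_mul_smul {g : ℝ → E} {g' : E} {x : ℝ} (c : ℝ) (hg : HasDerivAt g g' x) :
    HasDerivAt (fun x => Real.exp (c * x) • g x) (Real.exp (c * x) • (c • g x + g')) x := by
  have hexp : HasDerivAt (fun x => Real.exp (c * x)) (Real.exp (c * x) * c) x := by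
    simpa using ((hasDerivAt_id x).const_mul c).exp
  refine (hexp.smul hg).congr_deriv ?_
  module

lemma hasDerivAt_expResolvent [CompleteSpace E] {a : ℝ} (ha : a ≠ 0) {g : ℝ → E}
    (hg : Continuous g) (hgi : Integrable g) (x : ℝ) :
    HasDerivAt (expResolvent a g) (a • expResolvent a g x + g x) x := by
  let I (y : ℝ) : E := ∫ z in Ioi y, Real.exp (-z) • g (z / a)
  have hI : HasDerivAt (fun x => I (a * x)) (a • -(Real.exp (-(a * x)) • g x)) x := by
    have := hasDerivAt_integral_Ioi (φ := fun z => Real.exp (-z) • g (z / a)) (by fun_prop)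
      (integrableOn_exp_neg_smul (hgi.comp_div ha)) (a * x)
    simpa [ha, Function.comp_def] using this.scomp x ((hasDerivAt_id x).const_mul a)
  rw [funext (expResolvent_eq_smul_integral_Ioi ha g)]
  refine ((hasDerivAt_exp_mul_smul a hI).const_smul (-a⁻¹)).congr_deriv ?_
  have hinv : Real.exp (a * x) * Real.exp (-(a * x)) = 1 := by
    rw [← Real.exp_add, add_neg_cancel, Real.exp_zero]
  match_scalars
  · ring
  · linear_combination (a⁻¹ * a) * hinv + mul_inv_cancel₀ ha

lemma lintegral_comp_div {a : ℝ} (ha : a ≠ 0) (φ : ℝ → ENNReal) :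
    ∫⁻ t, φ (t / a) = ENNReal.ofReal |a| * ∫⁻ y, φ y := by
  have hscale := Real.map_volume_mul_left (inv_ne_zero ha)
  rw [inv_inv] at hscale
  rw [← smul_eq_mul, ← lintegral_smul_measure, ← hscale,
    (measurableEmbedding_mulLeft₀ (inv_ne_zero ha)).lintegral_map]
  simp only [div_eq_inv_mul]

lemma enorm_expResolvent_le (a : ℝ) (g : ℝ → E) (x : ℝ) :
    ‖expResolvent a g x‖ₑ ≤ eLpNorm g 1 := by
  rcases eq_or_ne a 0 with rfl | ha
  · simp [expResolvent]
  calc ‖expResolvent a g x‖ₑ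
      ≤ ‖a⁻¹‖ₑ * ∫⁻ t, ‖g (x + t / a)‖ₑ ∂expMeasure 1 := by
        rw [expResolvent, enorm_smul, enorm_neg]
        exact mul_le_mul_right (enorm_integral_le_lintegral_enorm _) _
    _ ≤ ‖a⁻¹‖ₑ * ∫⁻ t, ‖g (x + t / a)‖ₑ := by
        exact mul_le_mul_right (lintegral_mono' expMeasure_one_le_volume le_rfl) _
    _ = ∫⁻ y, ‖g y‖ₑ := by
        rw [lintegral_comp_div ha fun y => ‖g (x + y)‖ₑ, ← mul_assoc, Real.enorm_eq_ofReal_abs,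
          ← ENNReal.ofReal_mul (abs_nonneg _), ← abs_mul, inv_mul_cancel₀ ha,
          lintegral_add_left_eq_self (fun y => ‖g y‖ₑ) x]
        simp
    _ = eLpNorm g 1 volume := eLpNorm_one_eq_lintegral_enorm.symm

lemma continuous_expResolvent [CompleteSpace E] {a : ℝ} (ha : a ≠ 0) {g : ℝ → E}
    (hg : Continuous g) (hgi : Integrable g) : Continuous (expResolvent a g) :=
  continuous_iff_continuousAt.2 fun x => (hasDerivAt_expResolvent ha hg hgi x).continuousAt

lemma deriv_expResolvent [CompleteSpace E] {a : ℝ} (ha : a ≠ 0) {g : ℝ → E}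
    (hg : Continuous g) (hgi : Integrable g) :
    deriv (expResolvent a g) = a • expResolvent a g + g :=
  funext fun x => (hasDerivAt_expResolvent ha hg hgi x).deriv

lemma contDiff_expResolvent [CompleteSpace E] {a : ℝ} (ha : a ≠ 0) {g : ℝ → E}
    (hgi : Integrable g) {n : ℕ} (hg : ContDiff ℝ n g) :
    ContDiff ℝ (n + 1) (expResolvent a g) := by
  have hdiff : Differentiable ℝ (expResolvent a g) := fun x =>
    (hasDerivAt_expResolvent ha hg.continuous hgi x).differentiableAt
  refine contDiff_succ_iff_deriv.2 ⟨hdiff, by simp, ?_⟩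
  rw [deriv_expResolvent ha hg.continuous hgi]
  refine ContDiff.add (ContDiff.const_smul a ?_) hg
  induction n with
  | zero => exact contDiff_zero.2 hdiff.continuous
  | succ n ih =>
    have hg' : ContDiff ℝ n g := hg.of_le (by norm_cast; omega)
    rw [Nat.cast_succ, contDiff_succ_iff_deriv, deriv_expResolvent ha hg.continuous hgi]
    exact ⟨hdiff, by simp, ((ih hg').const_smul a).add hg'⟩

lemma lintegral_one_add_sq_rpow_expMeasure_lt_top {s : ℝ} (hs : 0 ≤ s) :
    ∫⁻ t, ENNReal.ofReal ((2 * (1 + t ^ 2)) ^ s) ∂expMeasure 1 < ⊤ := by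
  have hcont : Continuous fun t : ℝ => (2 * (1 + t ^ 2)) ^ s :=
    Continuous.rpow_const (by fun_prop) fun t => .inl (by positivity)
  have hdecay : (fun t : ℝ => Real.exp (-t) * (2 * (1 + t ^ 2)) ^ s) =O[atTop]
      fun t => Real.exp (-(1 / 2) * t) := by
    refine ((isBigO_refl (fun t => Real.exp (-t)) atTop).mul
      (isLittleO_one_add_sq_rpow_exp hs one_half_pos).isBigO).congr_right fun t => ?_
    rw [← Real.exp_add]
    ring_nf
  have hint := integrable_of_isBigO_exp_neg (a := 0) one_half_pos
    ((by fun_prop : Continuous fun t : ℝ => Real.exp (-t)).mul hcont).continuousOn hdecay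
  rw [expMeasure_one_eq, lintegral_withDensity_eq_lintegral_mul _ (by fun_prop) (by fun_prop)]
  refine (lintegral_congr fun t => ?_).trans_lt hint.lintegral_lt_top
  exact (ENNReal.ofReal_mul (Real.exp_nonneg _)).symm

lemma enorm_integral_sq_le {α : Type*} [MeasurableSpace α] {μ : Measure α}
    [IsProbabilityMeasure μ] {h : α → E} (hh : AEStronglyMeasurable h μ) :
    ‖∫ t, h t ∂μ‖ₑ ^ 2 ≤ ∫⁻ t, ‖h t‖ₑ ^ 2 ∂μ := by
  rw [← eLpNorm_two_sq]
  gcongr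
  calc ‖∫ t, h t ∂μ‖ₑ ≤ ∫⁻ t, ‖h t‖ₑ ∂μ := enorm_integral_le_lintegral_enorm h
    _ = eLpNorm h 1 μ := eLpNorm_one_eq_lintegral_enorm.symm
    _ ≤ eLpNorm h 2 μ := eLpNorm_le_eLpNorm_of_exponent_le one_le_two hh

lemma lintegral_comp_add_div_bracketMeasure_le {a : ℝ} (ha : 1 ≤ |a|) (s t : ℝ)
    (φ : ℝ → ENNReal) :
    ∫⁻ x, φ (x + t / a) ∂bracketMeasure s ≤
      ENNReal.ofReal ((2 * (1 + t ^ 2)) ^ |s|) * ∫⁻ x, φ x ∂bracketMeasure s := by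
  refine (lintegral_comp_add_bracketMeasure_le s (t / a) φ).trans ?_
  gcongr ENNReal.ofReal (?_ ^ _) * _
  rw [div_pow]
  gcongr
  exact div_le_self (sq_nonneg t) ((one_le_sq_iff_one_le_abs a).2 ha)

lemma exists_eLpNorm_expResolvent_le (s : ℝ) :
    ∃ K > (0 : ℝ), ∀ a : ℝ, 1 ≤ |a| → ∀ g : ℝ → E, Continuous g →
      eLpNorm (expResolvent a g) 2 (bracketMeasure s) ≤
        ENNReal.ofReal (K / |a|) * eLpNorm g 2 (bracketMeasure s) := by
  have : IsProbabilityMeasure (expMeasure 1) := isProbabilityMeasure_expMeasure one_pos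
  let M : ENNReal := ∫⁻ t, ENNReal.ofReal ((2 * (1 + t ^ 2)) ^ |s|) ∂expMeasure 1
  obtain ⟨K, hK, hMK⟩ : ∃ K > (0 : ℝ), M ≤ ENNReal.ofReal K ^ 2 := by
    have hM : M ≠ ⊤ := (lintegral_one_add_sq_rpow_expMeasure_lt_top (abs_nonneg s)).ne
    refine ⟨M.toReal + 1, by positivity, ?_⟩
    rw [← ENNReal.ofReal_pow (by positivity), ENNReal.le_ofReal_iff_toReal_le hM (by positivity)]
    nlinarith [M.toReal_nonneg]
  refine ⟨K, hK, fun a ha g hg => ?_⟩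
  rw [← ENNReal.pow_le_pow_left_iff two_ne_zero]
  calc eLpNorm (expResolvent a g) 2 (bracketMeasure s) ^ 2
      ≤ ∫⁻ x, ‖a⁻¹‖ₑ ^ 2 * ∫⁻ t, ‖g (x + t / a)‖ₑ ^ 2 ∂expMeasure 1 ∂bracketMeasure s := by
        rw [eLpNorm_two_sq]
        refine lintegral_mono fun x => ?_
        rw [expResolvent, enorm_smul, enorm_neg, mul_pow]
        gcongr
        exact enorm_integral_sq_le (by fun_prop)
    _ = ‖a⁻¹‖ₑ ^ 2 * ∫⁻ t, ∫⁻ x, ‖g (x + t / a)‖ₑ ^ 2 ∂bracketMeasure s ∂expMeasure 1 := by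
        rw [lintegral_const_mul' _ _ (by finiteness), lintegral_lintegral_swap]
        fun_prop
    _ ≤ ‖a⁻¹‖ₑ ^ 2 * ∫⁻ t, ENNReal.ofReal ((2 * (1 + t ^ 2)) ^ |s|) *
          eLpNorm g 2 (bracketMeasure s) ^ 2 ∂expMeasure 1 := by
        gcongr with t
        rw [eLpNorm_two_sq]
        exact lintegral_comp_add_div_bracketMeasure_le ha s t fun x => ‖g x‖ₑ ^ 2
    _ ≤ ‖a⁻¹‖ₑ ^ 2 * (ENNReal.ofReal K ^ 2 * eLpNorm g 2 (bracketMeasure s) ^ 2) := by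
        rw [lintegral_mul_const _ (by fun_prop)]
        gcongr
    _ = (ENNReal.ofReal (K / |a|) * eLpNorm g 2 (bracketMeasure s)) ^ 2 := by
        rw [div_eq_inv_mul, ← abs_inv, ENNReal.ofReal_mul (abs_nonneg _),
          ← Real.enorm_eq_ofReal_abs, mul_pow, mul_pow, mul_assoc]

lemma eLpNorm_expResolvent_bracketMeasure_neg_le (a s : ℝ) {g : ℝ → E}
    (hg : AEStronglyMeasurable g) :
    eLpNorm (expResolvent a g) 2 (bracketMeasure (-s)) ≤
      bracketMeasure (-s) univ * eLpNorm g 2 (bracketMeasure s) := by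
  let J := bracketMeasure (-s) univ
  calc eLpNorm (expResolvent a g) 2 (bracketMeasure (-s))
      ≤ eLpNorm g 1 volume * J ^ (1 / 2 : ℝ) := by
        simpa using eLpNorm_le_of_ae_enorm_bound (p := 2) (μ := bracketMeasure (-s))
          (.of_forall (enorm_expResolvent_le a g))
    _ ≤ eLpNorm g 2 (bracketMeasure s) * J ^ (1 / 2 : ℝ) * J ^ (1 / 2 : ℝ) := by
        gcongr
        exact eLpNorm_one_le_eLpNorm_two_bracketMeasure s hg
    _ = J * eLpNorm g 2 (bracketMeasure s) := by
        rw [mul_assoc, ← ENNReal.rpow_add_of_nonneg _ _ (by norm_num) (by norm_num)]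
        norm_num [mul_comm]

lemma memLp_expResolvent {a s : ℝ} (ha : 1 ≤ |a|) {g : ℝ → E} (hg : Continuous g)
    (h : MemLp g 2 (bracketMeasure s)) : MemLp (expResolvent a g) 2 (bracketMeasure s) := by
  obtain ⟨K, -, hK⟩ := exists_eLpNorm_expResolvent_le (E := E) s
  have : IsProbabilityMeasure (expMeasure 1) := isProbabilityMeasure_expMeasure one_pos
  have htranslate : Continuous (Function.uncurry fun x t : ℝ => g (x + t / a)) := by fun_prop
  exact ⟨(htranslate.stronglyMeasurable.integral_prod_right.const_smul _).aestronglyMeasurable,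
    (hK a ha g hg).trans_lt (ENNReal.mul_lt_top ENNReal.ofReal_lt_top h.2)⟩

lemma eLpNorm_deriv_expResolvent_bracketMeasure_neg_le [CompleteSpace E] {b s : ℝ} (hb : b ≠ 0)
    (hs : 0 ≤ s) {u : ℝ → E} (hu : Continuous u) (hui : Integrable u) :
    eLpNorm (deriv (expResolvent b u)) 2 (bracketMeasure (-s)) ≤
      (‖b‖ₑ * bracketMeasure (-s) univ + 1) * eLpNorm u 2 (bracketMeasure s) := by
  rw [deriv_expResolvent hb hu hui, add_mul, one_mul, mul_assoc]
  refine (eLpNorm_add_le ((continuous_expResolvent hb hu hui).aestronglyMeasurable.const_smul b)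
    hu.aestronglyMeasurable one_le_two).trans ?_
  rw [eLpNorm_const_smul]
  gcongr
  · exact eLpNorm_expResolvent_bracketMeasure_neg_le b s hu.aestronglyMeasurable
  · exact bracketMeasure_mono (by linarith)

lemma exists_eLpNorm_expResolvent_expResolvent_le [CompleteSpace E] {s : ℝ} (hs : 1 / 2 < s) :
    ∃ C > (0 : ℝ), ∀ a b : ℝ, 1 ≤ |a| → |b| ≤ |a| → b ≠ 0 → ∀ g : ℝ → E, Continuous g →
      MemLp g 2 (bracketMeasure s) →
      eLpNorm (expResolvent b (expResolvent a g)) 2 (bracketMeasure (-s)) ≤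
          ENNReal.ofReal (C / |a|) * eLpNorm g 2 (bracketMeasure s) ∧
        eLpNorm (deriv (expResolvent b (expResolvent a g))) 2 (bracketMeasure (-s)) ≤
          ENNReal.ofReal C * eLpNorm g 2 (bracketMeasure s) := by
  obtain ⟨K, hK, hbound⟩ := exists_eLpNorm_expResolvent_le (E := E) s
  have := isFiniteMeasure_bracketMeasure (neg_lt_neg hs)
  let J : ℝ := (bracketMeasure (-s)).real univ
  have hJ : 0 ≤ J := measureReal_nonneg
  have hJ_eq : bracketMeasure (-s) univ = ENNReal.ofReal J := by simp [J]
  refine ⟨(J + 1) * K, by positivity, fun a b ha hba hb g hg h => ?_⟩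
  have ha₀ : 0 < |a| := one_pos.trans_le ha
  have hu := continuous_expResolvent (abs_pos.1 ha₀) hg (integrable_of_memLp_bracketMeasure hs h)
  have hui := integrable_of_memLp_bracketMeasure hs (memLp_expResolvent ha hg h)
  constructor
  · refine (eLpNorm_expResolvent_bracketMeasure_neg_le b s hu.aestronglyMeasurable).trans
      ((mul_le_mul_right (hbound a ha g hg) _).trans ?_)
    rw [hJ_eq, ← mul_assoc, ← ENNReal.ofReal_mul hJ, mul_div_assoc]
    gcongr
    linarith
  · have hconst : (|b| * J + 1) * (K / |a|) ≤ (J + 1) * K := by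
      rw [mul_div_assoc', div_le_iff₀ ha₀, mul_right_comm]
      gcongr
      nlinarith
    refine (eLpNorm_deriv_expResolvent_bracketMeasure_neg_le hb (by linarith) hu hui).trans
      ((mul_le_mul_right (hbound a ha g hg) _).trans ?_)
    rw [hJ_eq, Real.enorm_eq_ofReal_abs, ← ENNReal.ofReal_mul (abs_nonneg b), ← ENNReal.ofReal_one,
      ← ENNReal.ofReal_add (by positivity) one_pos.le, ← mul_assoc,
      ← ENNReal.ofReal_mul (by positivity)]
    gcongr

end Resolvent

section SecondOrder

variable {E : Type*} [NormedAddCommGroup E] [NormedSpace ℝ E]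

lemma eq_exp_smul_of_hasDerivAt {a : ℝ} {k : ℝ → E} (hk : ∀ x, HasDerivAt k (a • k x) x)
    (x : ℝ) : k x = Real.exp (a * x) • k 0 := by
  have hderiv (y : ℝ) : HasDerivAt (fun y => Real.exp (-a * y) • k y) 0 y := by
    simpa using hasDerivAt_exp_mul_smul (-a) (hk y)
  have hconst := is_const_of_deriv_eq_zero (fun y => (hderiv y).differentiableAt)
    (fun y => (hderiv y).deriv) x 0
  simp only [mul_zero, Real.exp_zero, one_smul] at hconst
  rw [← hconst, smul_smul, ← Real.exp_add]
  simp

lemma eq_zero_of_memLp_exp_smul {a s : ℝ} (ha : a ≠ 0) {c : E}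
    (h : MemLp (fun x => Real.exp (a * x) • c) 2 (bracketMeasure s)) : c = 0 := by
  let N := eLpNorm (fun x : ℝ => Real.exp (a * x) • c) 2 (bracketMeasure s) ^ 2
  have htranslate (t : ℝ) : ENNReal.ofReal (Real.exp (2 * a * t)) * N ≤
      ENNReal.ofReal ((2 * (1 + t ^ 2)) ^ |s|) * N := by
    have hshift (x : ℝ) : ENNReal.ofReal (Real.exp (2 * a * t)) * ‖Real.exp (a * x) • c‖ₑ ^ 2 =
        ‖Real.exp (a * (x + t)) • c‖ₑ ^ 2 := by
      rw [mul_add, Real.exp_add, mul_comm (Real.exp _), mul_smul, enorm_smul (Real.exp (a * t)),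
        Real.enorm_of_nonneg (Real.exp_nonneg _), mul_pow, ← ENNReal.ofReal_pow (Real.exp_nonneg _),
        ← Real.exp_nat_mul, Nat.cast_ofNat, mul_assoc 2]
    dsimp only [N]
    rw [eLpNorm_two_sq, ← lintegral_const_mul' _ _ ENNReal.ofReal_ne_top]
    simp only [hshift]
    exact lintegral_comp_add_bracketMeasure_le s t fun x => ‖Real.exp (a * x) • c‖ₑ ^ 2
  obtain ⟨t, ht⟩ := exists_one_add_sq_rpow_lt_exp (abs_nonneg s) (mul_ne_zero two_ne_zero ha)
  have hN : N = 0 := by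
    by_contra hN
    have := htranslate t
    rw [ENNReal.mul_le_mul_iff_left hN (ENNReal.pow_lt_top h.2).ne] at this
    exact ht.not_ge ((ENNReal.ofReal_le_ofReal_iff (by positivity)).1 this)
  have hae : (fun x => Real.exp (a * x) • c) =ᵐ[bracketMeasure s] 0 :=
    (eLpNorm_eq_zero_iff h.1 two_ne_zero).1 (pow_eq_zero_iff two_ne_zero |>.1 hN)
  obtain ⟨x, hx⟩ := Eventually.exists ((absolutelyContinuous_bracketMeasure s).ae_le hae)
  simpa using hx

lemma eq_zero_of_hasDerivAt_of_memLp [CompleteSpace E] {a b s : ℝ} (ha : a ≠ 0) (hb : b ≠ 0)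
    {h k : ℝ → E} (hh : ∀ x, HasDerivAt h (b • h x + k x) x)
    (hk : ∀ x, HasDerivAt k (a • k x) x) (hL : MemLp h 2 (bracketMeasure s)) : h = 0 := by
  have hexp := eq_exp_smul_of_hasDerivAt hk
  have hcont : Continuous h := continuous_iff_continuousAt.2 fun x => (hh x).continuousAt
  let m : ℝ := ∫ σ in 0..1, Real.exp ((a - b) * σ)
  have hm : m ≠ 0 := (intervalIntegral.intervalIntegral_pos_of_pos
    (Continuous.intervalIntegrable (by fun_prop) _ _) (fun σ => Real.exp_pos _) one_pos).ne'
  have hincrement (x : ℝ) : m • k x = Real.exp (-b) • h (x + 1) - h x := by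
    have hderiv (σ : ℝ) : HasDerivAt (fun σ => Real.exp (-b * σ) • h (x + σ))
        (Real.exp ((a - b) * σ) • k x) σ := by
      refine (hasDerivAt_exp_mul_smul (-b) ((hh (x + σ)).comp_const_add x σ)).congr_deriv ?_
      rw [hexp (x + σ), hexp x]
      simp only [neg_smul, neg_add_cancel_left, smul_smul, ← Real.exp_add]
      ring_nf
    have := intervalIntegral.integral_eq_sub_of_hasDerivAt (fun σ _ => hderiv σ)
      (Continuous.intervalIntegrable (by fun_prop) 0 1)
    rw [intervalIntegral.integral_smul_const] at this
    simpa using this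
  have hkL : MemLp k 2 (bracketMeasure s) := by
    have := (((memLp_comp_add_bracketMeasure hcont hL 1).const_smul (Real.exp (-b))).sub
      hL).const_smul m⁻¹
    refine this.ae_eq (.of_forall fun x => ?_)
    simp only [Pi.smul_apply, Pi.sub_apply, ← hincrement]
    exact inv_smul_smul₀ hm _
  have hk₀ : k 0 = 0 := eq_zero_of_memLp_exp_smul ha (hkL.ae_eq (.of_forall hexp))
  have hhexp := eq_exp_smul_of_hasDerivAt (a := b) (k := h) fun x => by
    simpa [hexp x, hk₀] using hh x
  have hh₀ : h 0 = 0 := eq_zero_of_memLp_exp_smul hb (hL.ae_eq (.of_forall hhexp))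
  funext x
  simp [hhexp x, hh₀]

lemma ode_solution_unique_of_memLp_bracketMeasure [CompleteSpace E] {a b s : ℝ} (ha : a ≠ 0)
    (hb : b ≠ 0) {f r₁ r₂ : ℝ → E} (hr₁ : ContDiff ℝ 2 r₁) (hr₂ : ContDiff ℝ 2 r₂)
    (h₁ : ∀ x, -(deriv (deriv r₁) x) + (a + b) • deriv r₁ x - (a * b) • r₁ x = f x)
    (h₂ : ∀ x, -(deriv (deriv r₂) x) + (a + b) • deriv r₂ x - (a * b) • r₂ x = f x)
    (hL₁ : MemLp r₁ 2 (bracketMeasure s)) (hL₂ : MemLp r₂ 2 (bracketMeasure s)) : r₁ = r₂ := by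
  have hderiv {r : ℝ → E} (hr : ContDiff ℝ 2 r) (x : ℝ) : HasDerivAt r (deriv r x) x :=
    (hr.differentiable (by norm_num) x).hasDerivAt
  have hderiv₂ {r : ℝ → E} (hr : ContDiff ℝ 2 r) (x : ℝ) :
      HasDerivAt (deriv r) (deriv (deriv r) x) x :=
    ((hr.deriv' (n := 1)).differentiable (by norm_num) x).hasDerivAt
  let k (x : ℝ) : E := (deriv r₁ x - deriv r₂ x) - b • (r₁ x - r₂ x)
  have hk (x : ℝ) : HasDerivAt k (a • k x) x := by
    refine (((hderiv₂ hr₁ x).sub (hderiv₂ hr₂ x)).sub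
      (((hderiv hr₁ x).sub (hderiv hr₂ x)).const_smul b)).congr_deriv ?_
    have hode : deriv (deriv r₁) x - deriv (deriv r₂) x =
        (a + b) • (deriv r₁ x - deriv r₂ x) - (a * b) • (r₁ x - r₂ x) := by
      linear_combination (norm := module) h₂ x - h₁ x
    rw [hode]
    dsimp only [k]
    module
  refine sub_eq_zero.1 (eq_zero_of_hasDerivAt_of_memLp ha hb (k := k) (fun x => ?_) hk
    (hL₁.sub hL₂))
  refine ((hderiv hr₁ x).sub (hderiv hr₂ x)).congr_deriv ?_
  simp [k]

lemma contDiff_two_expResolvent_expResolvent [CompleteSpace E] {a b : ℝ} (ha : a ≠ 0)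
    (hb : b ≠ 0) {g : ℝ → E} (hg : Continuous g) (hgi : Integrable g)
    (hui : Integrable (expResolvent a g)) :
    ContDiff ℝ 2 (expResolvent b (expResolvent a g)) := by
  have hu : ContDiff ℝ 1 (expResolvent a g) := by
    simpa using contDiff_expResolvent ha hgi (n := 0) (contDiff_zero.2 hg)
  exact contDiff_expResolvent hb hui (n := 1) hu

lemma expResolvent_expResolvent_ode [CompleteSpace E] {a b : ℝ} (ha : a ≠ 0) (hb : b ≠ 0)
    {g : ℝ → E} (hg : Continuous g) (hgi : Integrable g) (hui : Integrable (expResolvent a g))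
    (x : ℝ) :
    -(deriv (deriv (expResolvent b (expResolvent a g))) x) +
      (a + b) • deriv (expResolvent b (expResolvent a g)) x -
      (a * b) • expResolvent b (expResolvent a g) x = -g x := by
  have hu := hasDerivAt_expResolvent ha hg hgi
  have hcont := continuous_expResolvent ha hg hgi
  have hr := hasDerivAt_expResolvent hb hcont hui
  rw [deriv_expResolvent hb hcont hui, (((hr x).const_smul b).add (hu x)).deriv]
  simp only [Pi.add_apply, Pi.smul_apply]
  module

lemma exists_contDiff_ode_eLpNorm_le [CompleteSpace E] {s : ℝ} (hs : 1 / 2 < s) :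
    ∃ C > (0 : ℝ), ∀ a b : ℝ, 1 ≤ |a| → |b| ≤ |a| → b ≠ 0 → ∀ f : ℝ → E, Continuous f →
      MemLp f 2 (bracketMeasure s) → ∃ r : ℝ → E, ContDiff ℝ 2 r ∧
        (∀ x, -(deriv (deriv r) x) + (a + b) • deriv r x - (a * b) • r x = f x) ∧
        eLpNorm r 2 (bracketMeasure (-s)) ≤
          ENNReal.ofReal (C / |a|) * eLpNorm f 2 (bracketMeasure s) ∧
        eLpNorm (deriv r) 2 (bracketMeasure (-s)) ≤
          ENNReal.ofReal C * eLpNorm f 2 (bracketMeasure s) := by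
  obtain ⟨C, hC, hbound⟩ := exists_eLpNorm_expResolvent_expResolvent_le (E := E) hs
  refine ⟨C, hC, fun a b ha hba hb f hf h => ⟨expResolvent b (expResolvent a (-f)), ?_⟩⟩
  have ha₀ : a ≠ 0 := abs_pos.1 (one_pos.trans_le ha)
  have hgi := integrable_of_memLp_bracketMeasure hs h.neg
  have hui := integrable_of_memLp_bracketMeasure hs (memLp_expResolvent ha hf.neg h.neg)
  have hode := expResolvent_expResolvent_ode ha₀ hb hf.neg hgi hui
  obtain ⟨hr, hr'⟩ := hbound a b ha hba hb (-f) hf.neg h.neg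
  simp only [eLpNorm_neg, Pi.neg_apply, neg_neg] at hr hr' hode
  exact ⟨contDiff_two_expResolvent_expResolvent ha₀ hb hf.neg hgi hui, hode, hr, hr'⟩

end SecondOrder

lemma exists_add_eq_mul_eq_abs_le (τ : ℝ) {μ : ℝ} (hμ : 0 ≤ μ) :
    ∃ a b : ℝ, a + b = 2 * τ ∧ a * b = τ ^ 2 - μ ∧ |τ| ≤ |a| ∧ |b| ≤ |a| := by
  have hsq := Real.sq_sqrt hμ
  have hs := Real.sqrt_nonneg μ
  rcases le_total 0 τ with hτ | hτ
  · refine ⟨τ + √μ, τ - √μ, by ring, by linear_combination -hsq, ?_, ?_⟩ <;>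
      rw [abs_of_nonneg (by positivity : 0 ≤ τ + √μ), abs_le] <;> constructor <;> linarith
  · refine ⟨τ - √μ, τ + √μ, by ring, by linear_combination -hsq, ?_, ?_⟩ <;>
      rw [abs_of_nonpos (by linarith : τ - √μ ≤ 0), abs_le] <;> constructor <;> linarith

theorem stmt2_general {E : Type*} [NormedAddCommGroup E] [NormedSpace ℝ E] [CompleteSpace E]
    (δ : ℝ) (hδ : 1 / 2 < δ) :
    ∃ C₀ > (0 : ℝ), ∀ τ : ℝ, 1 ≤ |τ| → ∀ μ : ℝ, 0 ≤ μ → τ ^ 2 ≠ μ →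
      ∀ f : ℝ → E, Continuous f →
        ∫⁻ x : ℝ, ENNReal.ofReal ((1 + x ^ 2) ^ δ * ‖f x‖ ^ 2) < ⊤ → ∃ r : ℝ → E,
        ContDiff ℝ 2 r ∧
        (∀ x : ℝ, -(deriv (deriv r) x) + (2 * τ) • deriv r x + (μ - τ ^ 2) • r x = f x) ∧
        (∫⁻ x : ℝ, ENNReal.ofReal ((1 + x ^ 2) ^ (-δ) * ‖r x‖ ^ 2) ≤
          ENNReal.ofReal (C₀ ^ 2 / τ ^ 2) *
            ∫⁻ x : ℝ, ENNReal.ofReal ((1 + x ^ 2) ^ δ * ‖f x‖ ^ 2)) ∧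
        (∫⁻ x : ℝ, ENNReal.ofReal ((1 + x ^ 2) ^ (-δ) * ‖deriv r x‖ ^ 2) ≤
          ENNReal.ofReal (C₀ ^ 2) *
            ∫⁻ x : ℝ, ENNReal.ofReal ((1 + x ^ 2) ^ δ * ‖f x‖ ^ 2)) ∧
        (∀ r' : ℝ → E, ContDiff ℝ 2 r' →
          (∀ x : ℝ, -(deriv (deriv r') x) + (2 * τ) • deriv r' x + (μ - τ ^ 2) • r' x = f x) →
          (∫⁻ x : ℝ, ENNReal.ofReal ((1 + x ^ 2) ^ (-δ) * ‖r' x‖ ^ 2) < ⊤) →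
          r' = r) := by
  obtain ⟨C₀, hC₀, hsolve⟩ := exists_contDiff_ode_eLpNorm_le (E := E) hδ
  refine ⟨C₀, hC₀, fun τ hτ μ hμ hτμ f hf hfδ => ?_⟩
  obtain ⟨a, b, hsum, hprod, hτa, hba⟩ := exists_add_eq_mul_eq_abs_le τ hμ
  have hab : a * b ≠ 0 := by rwa [hprod, sub_ne_zero]
  have ha : a ≠ 0 := left_ne_zero_of_mul hab
  have hb : b ≠ 0 := right_ne_zero_of_mul hab
  have hf₂ := (memLp_two_bracketMeasure_iff hf).2 hfδ
  obtain ⟨r, hr, hode, hbound, hbound'⟩ := hsolve a b (hτ.trans hτa) hba hb f hf hf₂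
  have hcoeff : μ - τ ^ 2 = -(a * b) := by rw [hprod, neg_sub]
  simp only [← hsum, hcoeff, neg_smul, ← sub_eq_add_neg]
  refine ⟨r, hr, hode, ?_, lintegral_le_of_eLpNorm_two_bracketMeasure_le hC₀.le hbound', ?_⟩
  · have hboundτ : eLpNorm r 2 (bracketMeasure (-δ)) ≤
        ENNReal.ofReal (C₀ / |τ|) * eLpNorm f 2 (bracketMeasure δ) := hbound.trans (by gcongr)
    simpa [div_pow] using lintegral_le_of_eLpNorm_two_bracketMeasure_le (by positivity) hboundτ
  · intro r' hr' hode' hfin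
    have hr₂ : MemLp r 2 (bracketMeasure (-δ)) := ⟨hr.continuous.aestronglyMeasurable,
      hbound.trans_lt (ENNReal.mul_lt_top ENNReal.ofReal_lt_top hf₂.2)⟩
    exact ode_solution_unique_of_memLp_bracketMeasure ha hb hr' hr hode' hode
      ((memLp_two_bracketMeasure_iff hr'.continuous).2 hfin) hr₂

/-- The one-dimensional weighted estimate for the conjugated equation
`−r'' + 2τ r' + (μ − τ²) r = f`: for `δ > 1/2` there is `C₀ > 0`, uniform in
`τ` with `|τ| ≥ 1` and in `μ ≥ 0` with `τ² ≠ μ`, such that for every Schwartz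
function `f` there is a unique `C²` solution `r` with finite `L²_{−δ}` norm, and
it satisfies `‖r‖_{L²_{−δ}} ≤ (C₀/|τ|)‖f‖_{L²_δ}` and `‖r'‖_{L²_{−δ}} ≤ C₀‖f‖_{L²_δ}`. -/
theorem stmt2 (δ : ℝ) (hδ : 1 / 2 < δ) :
    ∃ C₀ > (0 : ℝ), ∀ τ : ℝ, 1 ≤ |τ| → ∀ μ : ℝ, 0 ≤ μ → τ ^ 2 ≠ μ →
      ∀ f : SchwartzMap ℝ ℂ, ∃ r : ℝ → ℂ,
        ContDiff ℝ 2 r ∧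
        (∀ x : ℝ, -(deriv (deriv r) x) + (2 * (τ : ℂ)) * deriv r x +
            ((μ : ℂ) - (τ : ℂ) ^ 2) * r x = f x) ∧
        (∫⁻ x : ℝ, ENNReal.ofReal ((1 + x ^ 2) ^ (-δ) * ‖r x‖ ^ 2) ≤
          ENNReal.ofReal (C₀ ^ 2 / τ ^ 2) *
            ∫⁻ x : ℝ, ENNReal.ofReal ((1 + x ^ 2) ^ δ * ‖f x‖ ^ 2)) ∧
        (∫⁻ x : ℝ, ENNReal.ofReal ((1 + x ^ 2) ^ (-δ) * ‖deriv r x‖ ^ 2) ≤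
          ENNReal.ofReal (C₀ ^ 2) *
            ∫⁻ x : ℝ, ENNReal.ofReal ((1 + x ^ 2) ^ δ * ‖f x‖ ^ 2)) ∧
        (∀ r' : ℝ → ℂ, ContDiff ℝ 2 r' →
          (∀ x : ℝ, -(deriv (deriv r') x) + (2 * (τ : ℂ)) * deriv r' x +
              ((μ : ℂ) - (τ : ℂ) ^ 2) * r' x = f x) →
          (∫⁻ x : ℝ, ENNReal.ofReal ((1 + x ^ 2) ^ (-δ) * ‖r' x‖ ^ 2) < ⊤) →
          r' = r) := by
  obtain ⟨C₀, hC₀, h⟩ := stmt2_general (E := ℂ) δ hδ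
  refine ⟨C₀, hC₀, fun τ hτ μ hμ hτμ f => ?_⟩
  simpa using h τ hτ μ hμ hτμ f f.continuous
    ((memLp_two_bracketMeasure_iff f.continuous).1 (f.memLp 2 (bracketMeasure δ)))
end

section
/- Let n ≥ 1, let a < b be real numbers, and let V ⊆ ℝⁿ be an open neighborhood of the segment S = {(t,0,…,0) : t ∈ (a,b)}. Suppose F : V → ℝⁿ is continuously differentiable, the restriction of F to S is injective, and for every t ∈ (a,b) the Fréchet derivative DF(t,0) is an invertible linear map. Then for any closed subinterval [a₀,b₀] ⊆ (a,b) there exists an open set U with {(t,0,…,0) : t ∈ [a₀,b₀]} ⊆ U ⊆ V such that F restricted to U is injective, F(U) is open in ℝⁿ, and the inverse map F(U) → U is continuously differentiable; that is, F is a C¹ diffeomorphism from U onto F(U). -/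
/-- The point `(t, 0, …, 0)` of `ℝⁿ`. -/
def segPt (n : ℕ) (t : ℝ) : Fin n → ℝ := fun i => if (i : ℕ) = 0 then t else 0

/-!
Let `K` be the compact set on which `F` is injective with invertible derivative. By the inverse
function theorem `F` is injective near each point of `K`. It is then injective on a whole
neighborhood of `K`: otherwise there would be pairs `x ≠ y` with `F x = F y` approaching `K`, and by
compactness they would accumulate at a pair `(p, q) ∈ K × K` with `F p = F q`; hence `p = q`,
contradicting injectivity near `p`. Intersecting with the open set where `DF` is invertible, `F`
becomes an open map whose inverse agrees locally with the one of the inverse function theorem.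
-/

open Filter Set Topology

section StrictDerivative

variable {𝕜 E F : Type*} [NontriviallyNormedField 𝕜]
  [NormedAddCommGroup E] [NormedSpace 𝕜 E] [CompleteSpace E]
  [NormedAddCommGroup F] [NormedSpace 𝕜 F]

theorem isInvertible_iff_bijective [CompleteSpace F] {A : E →L[𝕜] F} :
    A.IsInvertible ↔ Function.Bijective A :=
  ⟨fun hA => hA.bijective, fun hA =>
    ⟨.ofBijective A (LinearMap.ker_eq_bot.2 hA.1) (LinearMap.range_eq_top.2 hA.2), by ext; rfl⟩⟩

theorem isOpen_setOf_isInvertible_fderiv {k : WithTop ℕ∞} {f : E → F} {V : Set E}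
    (hf : ContDiffOn 𝕜 k f V) (hk : k ≠ 0) (hV : IsOpen V) :
    IsOpen {x ∈ V | (fderiv 𝕜 f x).IsInvertible} :=
  (hf.continuousOn_fderiv_of_isOpen hV
    (ENat.one_le_iff_ne_zero_withTop.2 hk)).isOpen_inter_preimage hV ContinuousLinearEquiv.isOpen

theorem exists_mem_nhds_injOn_of_hasStrictFDerivAt {f : E → F} {f' : E ≃L[𝕜] F} {x : E}
    (hf : HasStrictFDerivAt f (f' : E →L[𝕜] F) x) : ∃ u ∈ 𝓝 x, InjOn f u :=
  let φ := hf.toOpenPartialHomeomorph f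
  ⟨φ.source, φ.open_source.mem_nhds hf.mem_toOpenPartialHomeomorph_source, φ.injOn⟩

theorem isOpen_image_of_hasStrictFDerivAt {f : E → F} {U : Set E} (hU : IsOpen U)
    (hf : ∀ x ∈ U, ∃ f' : E ≃L[𝕜] F, HasStrictFDerivAt f (f' : E →L[𝕜] F) x) :
    IsOpen (f '' U) := by
  refine isOpen_iff_mem_nhds.2 (forall_mem_image.2 fun x hx => ?_)
  obtain ⟨f', hf'⟩ := hf x hx
  rw [← hf'.map_nhds_eq_of_equiv]
  exact image_mem_map (hU.mem_nhds hx)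

end StrictDerivative

section ContDiff

variable {𝕜 E F : Type*} [RCLike 𝕜] [NormedAddCommGroup E] [NormedSpace 𝕜 E]
  [NormedAddCommGroup F] [NormedSpace 𝕜 F] {k : WithTop ℕ∞} {f : E → F}

theorem exists_equiv_hasStrictFDerivAt {x : E} (hf : ContDiffAt 𝕜 k f x) (hk : k ≠ 0)
    (hx : (fderiv 𝕜 f x).IsInvertible) :
    ∃ f' : E ≃L[𝕜] F, HasStrictFDerivAt f (f' : E →L[𝕜] F) x := by
  obtain ⟨f', hf'⟩ := hx
  exact ⟨f', hf' ▸ hf.hasStrictFDerivAt hk⟩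

variable [CompleteSpace E]

theorem contDiffAt_of_eventually_leftInverse {g : F → E} {x : E} (hf : ContDiffAt 𝕜 k f x)
    (hk : k ≠ 0) (hx : (fderiv 𝕜 f x).IsInvertible) (hg : ∀ᶠ z in 𝓝 x, g (f z) = z) :
    ContDiffAt 𝕜 k g (f x) := by
  obtain ⟨f', hf'⟩ := exists_equiv_hasStrictFDerivAt hf hk hx
  exact (hf.to_localInverse hf'.hasFDerivAt hk).congr_of_eventuallyEq (hf'.localInverse_unique hg)

theorem exists_isOpen_injOn_isInvertible_fderiv {K V : Set E} (hK : IsCompact K) (hV : IsOpen V)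
    (hKV : K ⊆ V) (hf : ContDiffOn 𝕜 k f V) (hk : k ≠ 0) (hinj : InjOn f K)
    (hinv : ∀ x ∈ K, (fderiv 𝕜 f x).IsInvertible) :
    ∃ U, IsOpen U ∧ K ⊆ U ∧ U ⊆ V ∧ InjOn f U ∧ ∀ x ∈ U, (fderiv 𝕜 f x).IsInvertible := by
  have hfK : ∀ x ∈ K, ContDiffAt 𝕜 k f x := fun x hx => hf.contDiffAt (hV.mem_nhds (hKV hx))
  have hloc : ∀ x ∈ K, ∃ u ∈ 𝓝 x, InjOn f u := fun x hx =>
    let ⟨_, hf'⟩ := exists_equiv_hasStrictFDerivAt (hfK x hx) hk (hinv x hx)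
    exists_mem_nhds_injOn_of_hasStrictFDerivAt hf'
  obtain ⟨T, hT, hKT, hTinj⟩ :=
    hinj.exists_isOpen_superset hK (fun x hx => (hfK x hx).continuousAt) hloc
  exact ⟨T ∩ {x ∈ V | (fderiv 𝕜 f x).IsInvertible},
    hT.inter (isOpen_setOf_isInvertible_fderiv hf hk hV),
    fun x hx => ⟨hKT hx, hKV hx, hinv x hx⟩, fun _ hx => hx.2.1,
    hTinj.mono inter_subset_left, fun _ hx => hx.2.2⟩

theorem exists_contDiffOn_inverse {U : Set E} (hU : IsOpen U) (hf : ContDiffOn 𝕜 k f U)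
    (hk : k ≠ 0) (hinj : InjOn f U) (hinv : ∀ x ∈ U, (fderiv 𝕜 f x).IsInvertible) :
    IsOpen (f '' U) ∧ ∃ g : F → E, ContDiffOn 𝕜 k g (f '' U) ∧
      (∀ x ∈ U, g (f x) = x) ∧ ∀ y ∈ f '' U, f (g y) = y := by
  have hfU : ∀ x ∈ U, ContDiffAt 𝕜 k f x := fun x hx => hf.contDiffAt (hU.mem_nhds hx)
  have hleft : LeftInvOn (Function.invFunOn f U) f U := hinj.leftInvOn_invFunOn
  refine ⟨isOpen_image_of_hasStrictFDerivAt hU fun x hx =>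
      exists_equiv_hasStrictFDerivAt (hfU x hx) hk (hinv x hx),
    Function.invFunOn f U, forall_mem_image.2 fun x hx => ?_, hleft, hleft.rightInvOn_image⟩
  exact (contDiffAt_of_eventually_leftInverse (hfU x hx) hk (hinv x hx)
    (eventually_of_mem (hU.mem_nhds hx) hleft)).contDiffWithinAt

theorem stmt3_general {K V : Set E} (hK : IsCompact K) (hV : IsOpen V) (hKV : K ⊆ V)
    (hf : ContDiffOn 𝕜 k f V) (hk : k ≠ 0) (hinj : InjOn f K)
    (hinv : ∀ x ∈ K, (fderiv 𝕜 f x).IsInvertible) :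
    ∃ U, IsOpen U ∧ K ⊆ U ∧ U ⊆ V ∧ InjOn f U ∧ IsOpen (f '' U) ∧
      ∃ g : F → E, ContDiffOn 𝕜 k g (f '' U) ∧
        (∀ x ∈ U, g (f x) = x) ∧ ∀ y ∈ f '' U, f (g y) = y := by
  obtain ⟨U, hU, hKU, hUV, hUinj, hUinv⟩ :=
    exists_isOpen_injOn_isInvertible_fderiv hK hV hKV hf hk hinj hinv
  exact ⟨U, hU, hKU, hUV, hUinj, exists_contDiffOn_inverse hU (hf.mono hUV) hk hUinj hUinv⟩

end ContDiff

theorem continuous_segPt (n : ℕ) : Continuous (segPt n) :=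
  continuous_pi fun _ => Continuous.if_const _ continuous_id continuous_const

/-- If `F` is a `C¹` map on a neighborhood `V` of the segment
`S = {(t,0,…,0) : t ∈ (a,b)}` in `ℝⁿ`, injective on `S`, and `DF(t,0)` is invertible
for every `t ∈ (a,b)`, then for any closed subinterval `[a₀,b₀] ⊆ (a,b)` the map `F`
is a `C¹` diffeomorphism from some open neighborhood `U` of `{(t,0,…,0) : t ∈ [a₀,b₀]}`
(with `U ⊆ V`) onto its open image. -/
theorem stmt3 (n : ℕ) (hn : 1 ≤ n) (a b : ℝ) (hab : a < b)
    (V : Set (Fin n → ℝ)) (hV : IsOpen V) (hSV : segPt n '' Set.Ioo a b ⊆ V)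
    (F : (Fin n → ℝ) → (Fin n → ℝ)) (hF : ContDiffOn ℝ 1 F V)
    (hinj : Set.InjOn F (segPt n '' Set.Ioo a b))
    (hder : ∀ t ∈ Set.Ioo a b, Function.Bijective ⇑(fderiv ℝ F (segPt n t)))
    (a₀ b₀ : ℝ) (ha₀ : a < a₀) (hab₀ : a₀ ≤ b₀) (hb₀ : b₀ < b) :
    ∃ U : Set (Fin n → ℝ), IsOpen U ∧ segPt n '' Set.Icc a₀ b₀ ⊆ U ∧ U ⊆ V ∧
      Set.InjOn F U ∧ IsOpen (F '' U) ∧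
      ∃ G : (Fin n → ℝ) → (Fin n → ℝ), ContDiffOn ℝ 1 G (F '' U) ∧
        (∀ x ∈ U, G (F x) = x) ∧ ∀ y ∈ F '' U, F (G y) = y := by
  have hsub : Icc a₀ b₀ ⊆ Ioo a b := Icc_subset_Ioo ha₀ hb₀
  exact stmt3_general (isCompact_Icc.image (continuous_segPt n)) hV
    ((image_mono hsub).trans hSV) hF one_ne_zero (hinj.mono (image_mono hsub))
    (forall_mem_image.2 fun t ht => isInvertible_iff_bijective.2 (hder t (hsub ht)))
end

section
/- Let d ≥ 1, let O ⊆ ℝ^d be open, and let F : ℝ × ℝ^d → ℂ be continuous with compact support. Define the partial Fourier transform F̂(λ, y) = ∫_ℝ e^{−i λ x₁} F(x₁, y) dx₁. Assume: (i) (injectivity of the local segment transform on O) for every continuous compactly supported g : ℝ^d → ℂ, if ∫_0^L g(x + tθ) dt = 0 for every x ∈ ℝ^d, every unit vector θ ∈ ℝ^d, and every L > 0 such that the segment {x + tθ : t ∈ [0,L]} is contained in O, then g vanishes identically on O; and (ii) for every λ ∈ ℝ and every such segment, ∫_0^L e^{−2λ t} F̂(2λ, x + tθ) dt = 0. Then F(x₁,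 y) = 0 for all x₁ ∈ ℝ and all y ∈ O. -/
open MeasureTheory

/-- The partial Fourier transform in the first variable of a function on `ℝ × ℝ^d`. -/
noncomputable def pFourier (d : ℕ) (F : ℝ × EuclideanSpace ℝ (Fin d) → ℂ)
    (lam : ℝ) (y : EuclideanSpace ℝ (Fin d)) : ℂ :=
  ∫ x₁ : ℝ, Complex.exp (-Complex.I * (lam : ℂ) * (x₁ : ℂ)) * F (x₁, y)

/-!
Since `F` has compact support, its partial Fourier transform is an everywhere convergent power
series in the frequency, so by Fourier inversion `F` is determined by its moments `∫ xⁿ F(x, y) dx`.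
Along a segment, or any continuous curve `γ` in `O`, the attenuated integral is also a power series
in `lam`, whose `n`-th coefficient is a multiple of `∫∫ (t + i x)ⁿ F(x, γ t) dx dt`; all of these
vanish as soon as its zeros accumulate at `0`. When the moments of order less than `n` vanish on
`O`, the binomial expansion leaves only `iⁿ` times the integral of the `n`-th moment along `γ`.
Injectivity then kills that moment on `O`, and strong induction on `n` kills all of them.
-/

open Filter Topology Set FourierTransform

section PowerSeries

theorem coeff_eq_zero_of_hasSum_of_frequently_eq_zero {𝕜 V : Type*} [NontriviallyNormedField 𝕜]
    [NormedAddCommGroup V] [NormedSpace 𝕜 V] {c : ℕ → V} {g : 𝕜 → V}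
    (hg : ∀ᶠ s in 𝓝 0, HasSum (fun n ↦ s ^ n • c n) (g s)) (h0 : ∃ᶠ s in 𝓝[≠] 0, g s = 0) :
    c = 0 := by
  let p : FormalMultilinearSeries 𝕜 𝕜 V := fun n ↦ ContinuousMultilinearMap.mkPiRing 𝕜 (Fin n) (c n)
  have hcoeff : p.coeff = c := by
    ext n
    simp [p, FormalMultilinearSeries.coeff]
  have hp : HasFPowerSeriesAt g p 0 := hasFPowerSeriesAt_iff.2 (by simpa [hcoeff] using hg)
  have hp0 : p = 0 := by
    by_contra hne
    exact h0 (hp.locally_ne_zero hne)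
  rw [← hcoeff, hp0]
  rfl

variable {α : Type*} [MeasurableSpace α] {μ : Measure α}
  {V : Type*} [NormedAddCommGroup V] [NormedSpace ℂ V]
  {φ : α → ℂ} {f : α → V} {C : ℝ}

theorem hasSum_integral_exp_smul (hφ : AEStronglyMeasurable φ μ) (hf : Integrable f μ)
    (hC : ∀ᵐ a ∂μ, f a ≠ 0 → ‖φ a‖ ≤ C) (s : ℝ) :
    HasSum (fun n : ℕ ↦ s ^ n • (n.factorial : ℝ)⁻¹ • ∫ a, φ a ^ n • f a ∂μ)
      (∫ a, Complex.exp (s * φ a) • f a ∂μ) := by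
  have hexp : ∀ x : ℝ, HasSum (fun n : ℕ ↦ x ^ n / n.factorial) (Real.exp x) := fun x ↦ by
    simpa only [Real.exp_eq_exp_ℝ] using NormedSpace.expSeries_div_hasSum_exp x
  have hcexp : ∀ z : ℂ, HasSum (fun n : ℕ ↦ z ^ n / n.factorial) (Complex.exp z) := fun z ↦ by
    simpa only [Complex.exp_eq_exp_ℂ] using NormedSpace.expSeries_div_hasSum_exp z
  have hterm : ∀ n : ℕ, s ^ n • (n.factorial : ℝ)⁻¹ • ∫ a, φ a ^ n • f a ∂μ
      = ∫ a, ((s * φ a) ^ n / n.factorial) • f a ∂μ := fun n ↦ by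
    simp_rw [← integral_smul, ← Complex.coe_smul, smul_smul]
    congr! 3
    push_cast
    ring
  simp_rw [hterm]
  refine hasSum_integral_of_dominated_convergence
    (fun n a ↦ (|s| * C) ^ n / n.factorial * ‖f a‖) (fun n ↦ ?_) (fun n ↦ ?_) ?_ ?_ ?_
  · exact (((hφ.const_mul _).pow n).mul_const _).smul hf.aestronglyMeasurable
  · filter_upwards [hC] with a ha
    obtain h0 | h0 := eq_or_ne (f a) 0
    · simp [h0]
    · simp only [norm_smul, norm_div, norm_pow, norm_mul, Complex.norm_real, Real.norm_eq_abs,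
        Complex.norm_natCast]
      gcongr
      exact ha h0
  · exact .of_forall fun a ↦ ((hexp _).mul_right _).summable
  · simp_rw [fun a ↦ ((hexp (|s| * C)).mul_right ‖f a‖).tsum_eq]
    exact hf.norm.const_mul _
  · exact .of_forall fun a ↦ (hcexp _).smul_const _

theorem integral_pow_smul_eq_zero_of_frequently (hφ : AEStronglyMeasurable φ μ)
    (hf : Integrable f μ) (hC : ∀ᵐ a ∂μ, f a ≠ 0 → ‖φ a‖ ≤ C)
    (h0 : ∃ᶠ s : ℝ in 𝓝[≠] 0, ∫ a, Complex.exp (s * φ a) • f a ∂μ = 0) (n : ℕ) :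
    ∫ a, φ a ^ n • f a ∂μ = 0 := by
  have hcoeff := congrFun (coeff_eq_zero_of_hasSum_of_frequently_eq_zero
    (.of_forall (hasSum_integral_exp_smul hφ hf hC)) h0) n
  exact (smul_eq_zero_iff_right (by positivity)).1 hcoeff

end PowerSeries

section Moments

variable {V : Type*} [NormedAddCommGroup V] [NormedSpace ℂ V]

theorem fourier_eq_zero_of_forall_moment_eq_zero {h : ℝ → V} (hc : Continuous h)
    (hs : HasCompactSupport h) (hm : ∀ n : ℕ, ∫ x : ℝ, (x : ℂ) ^ n • h x = 0) : 𝓕 h = 0 := by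
  obtain ⟨C, hC⟩ := hs.isCompact.exists_bound_of_continuousOn
    (f := fun x : ℝ ↦ (-2 * Real.pi * Complex.I : ℂ) * x) (by fun_prop)
  ext ξ
  have hsum := hasSum_integral_exp_smul (μ := volume)
    (φ := fun x : ℝ ↦ (-2 * Real.pi * Complex.I : ℂ) * x) (f := h)
    (by fun_prop) (hc.integrable_of_hasCompactSupport hs)
    (.of_forall fun x hx ↦ hC x (subset_tsupport h hx)) ξ
  have hterm : ∀ n : ℕ, ∫ x : ℝ, ((-2 * Real.pi * Complex.I : ℂ) * x) ^ n • h x = 0 := fun n ↦ by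
    simp_rw [mul_pow, mul_smul, integral_smul, hm, smul_zero]
  simp_rw [hterm, smul_zero] at hsum
  rw [Real.fourier_real_eq_integral_exp_smul, Pi.zero_apply, ← hsum.unique hasSum_zero]
  congr! 4 with x
  push_cast
  ring

theorem eq_zero_of_forall_moment_eq_zero [CompleteSpace V] {h : ℝ → V} (hc : Continuous h)
    (hs : HasCompactSupport h) (hm : ∀ n : ℕ, ∫ x : ℝ, (x : ℂ) ^ n • h x = 0) : h = 0 := by
  have hF : 𝓕 h = 0 := fourier_eq_zero_of_forall_moment_eq_zero hc hs hm
  rw [← hc.fourierInv_fourier_eq (hc.integrable_of_hasCompactSupport hs)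
    (hF ▸ integrable_zero _ _ _), hF]
  ext x
  simp [Real.fourierInv_eq]

theorem integral_add_mul_pow_smul_of_moment_eq_zero {α : Type*} [MeasurableSpace α] {μ : Measure α}
    {u : α → ℂ} {h : α → V} {n : ℕ} (hint : ∀ j ≤ n, Integrable (fun x ↦ u x ^ j • h x) μ)
    (hlow : ∀ j < n, ∫ x, u x ^ j • h x ∂μ = 0) (a b : ℂ) :
    ∫ x, (a + b * u x) ^ n • h x ∂μ = b ^ n • ∫ x, u x ^ n • h x ∂μ := by
  have hexpand : ∀ x, (a + b * u x) ^ n • h x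
      = ∑ j ∈ Finset.range (n + 1), (b ^ j * a ^ (n - j) * n.choose j) • u x ^ j • h x := by
    intro x
    rw [add_comm, add_pow, Finset.sum_smul]
    refine Finset.sum_congr rfl fun j _ ↦ ?_
    rw [smul_smul]
    congr 1
    ring
  simp only [hexpand]
  rw [integral_finsetSum _ fun j hj ↦ (hint j (Finset.mem_range_succ_iff.1 hj)).fun_smul _,
    Finset.sum_range_succ, Finset.sum_eq_zero fun j hj ↦ by
      rw [integral_smul, hlow j (Finset.mem_range.1 hj), smul_zero]]
  simp [integral_smul]

end Moments

section IteratedIntegrals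

variable {X Y V : Type*} [TopologicalSpace X] [T2Space X] [MeasurableSpace X]
  [OpensMeasurableSpace X] [TopologicalSpace Y] [T2Space Y] [MeasurableSpace Y]
  [OpensMeasurableSpace Y] [SecondCountableTopologyEither X Y] [NormedAddCommGroup V]
  {μ : Measure X} [SFinite μ] [IsFiniteMeasureOnCompacts μ]
  {ν : Measure Y} [SFinite ν] [IsFiniteMeasureOnCompacts ν]
  {S : Set X} {K : Set Y} {f : X × Y → V}

theorem integrable_restrict_prod_of_continuous (hS : IsCompact S) (hK : IsCompact K)
    (hf : Continuous f) (h0 : ∀ x, ∀ y ∉ K, f (x, y) = 0) :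
    Integrable f ((μ.restrict S).prod ν) := by
  have hsupp : Function.support f ⊆ univ ×ˢ K := fun p hp ↦
    ⟨mem_univ _, by_contra fun hy ↦ hp (h0 p.1 p.2 hy)⟩
  rw [← integrableOn_iff_integrable_of_support_subset hsupp, IntegrableOn,
    ← Measure.prod_restrict, Measure.restrict_univ, Measure.prod_restrict]
  exact hf.continuousOn.integrableOn_compact (hS.prod hK)

theorem integral_integral_pow_smul_eq_zero_of_frequently [NormedSpace ℂ V] {φ : X × Y → ℂ}
    (hS : IsCompact S) (hK : IsCompact K)
    (hφ : Continuous φ) (hf : Continuous f) (h0 : ∀ x, ∀ y ∉ K, f (x, y) = 0)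
    (hexp : ∃ᶠ s : ℝ in 𝓝[≠] 0,
      ∫ x in S, ∫ y, Complex.exp (s * φ (x, y)) • f (x, y) ∂ν ∂μ = 0) (n : ℕ) :
    ∫ x in S, ∫ y, φ (x, y) ^ n • f (x, y) ∂ν ∂μ = 0 := by
  have hfubini : ∀ w : X × Y → ℂ, Continuous w →
      ∫ p, w p • f p ∂(μ.restrict S).prod ν
        = ∫ x in S, ∫ y, w (x, y) • f (x, y) ∂ν ∂μ := fun w hw ↦
    integral_prod _ (integrable_restrict_prod_of_continuous hS hK (hw.smul hf)
      fun x y hy ↦ by simp [h0 x y hy])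
  obtain ⟨C, hC⟩ := (hS.prod hK).exists_bound_of_continuousOn hφ.continuousOn
  have hbound : ∀ᵐ p ∂(μ.restrict S).prod ν, f p ≠ 0 → ‖φ p‖ ≤ C := by
    filter_upwards [Measure.quasiMeasurePreserving_fst.ae (ae_restrict_mem hS.measurableSet)]
      with p hpS hp
    exact hC p ⟨hpS, by_contra fun hy ↦ hp (h0 p.1 p.2 hy)⟩
  rw [← hfubini (fun p ↦ φ p ^ n) (by fun_prop)]
  refine integral_pow_smul_eq_zero_of_frequently hφ.aestronglyMeasurable
    (integrable_restrict_prod_of_continuous hS hK hf h0) hbound (hexp.mono fun s hs ↦ ?_) n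
  rwa [hfubini (fun p ↦ Complex.exp (s * φ p)) (by fun_prop)]

end IteratedIntegrals

section Slices

variable {X Y V : Type*} [TopologicalSpace X] [TopologicalSpace Y] [Zero V] {F : X × Y → V}

theorem apply_eq_zero_of_notMem_fst_image_tsupport {x : X} (hx : x ∉ Prod.fst '' tsupport F)
    (y : Y) : F (x, y) = 0 :=
  image_eq_zero_of_notMem_tsupport fun h ↦ hx ⟨(x, y), h, rfl⟩

theorem apply_eq_zero_of_notMem_snd_image_tsupport {y : Y} (hy : y ∉ Prod.snd '' tsupport F)
    (x : X) : F (x, y) = 0 :=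
  image_eq_zero_of_notMem_tsupport fun h ↦ hy ⟨(x, y), h, rfl⟩

theorem hasCompactSupport_slice_fst [R1Space X] (hFc : HasCompactSupport F) (y : Y) :
    HasCompactSupport fun x ↦ F (x, y) :=
  .intro (hFc.isCompact.image continuous_fst) fun _ hx ↦
    apply_eq_zero_of_notMem_fst_image_tsupport hx y

end Slices

section FiberMoments

variable {E V : Type*} [TopologicalSpace E] [NormedAddCommGroup V] [NormedSpace ℂ V] {F : ℝ × E → V}

/-- The partial Fourier transform of `F` in its first variable, at frequency `lam`: the analogue of
`pFourier` for functions on `ℝ × E` with values in a complex normed space. -/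
noncomputable def partialFourier {E : Type*} (F : ℝ × E → V) (lam : ℝ) (y : E) : V :=
  ∫ x : ℝ, Complex.exp (-Complex.I * (lam : ℂ) * (x : ℂ)) • F (x, y)

/-- The `n`-th moment of `F` in its first variable, as a function of the second one. Up to the
factor `(-i)ⁿ` this is the `n`-th derivative of `partialFourier F` at frequency `0`. -/
noncomputable def fiberMoment {E : Type*} (F : ℝ × E → V) (n : ℕ) (y : E) : V :=
  ∫ x : ℝ, (x : ℂ) ^ n • F (x, y)

theorem continuous_fiberMoment (hF : Continuous F) (hFc : HasCompactSupport F) (n : ℕ) :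
    Continuous (fiberMoment F n) := by
  refine continuousOn_univ.1 (continuousOn_integral_of_compact_support
    (hFc.isCompact.image continuous_fst) ?_ fun y x _ hx ↦ ?_)
  · simp only [Function.uncurry_def]
    fun_prop
  · rw [apply_eq_zero_of_notMem_fst_image_tsupport hx, smul_zero]

theorem hasCompactSupport_fiberMoment [R1Space E] (hFc : HasCompactSupport F) (n : ℕ) :
    HasCompactSupport (fiberMoment F n) :=
  .intro (hFc.isCompact.image continuous_snd) fun y hy ↦ by
    simp [fiberMoment, apply_eq_zero_of_notMem_snd_image_tsupport hy]

theorem integral_fiberMoment_comp_eq_zero (hF : Continuous F) (hFc : HasCompactSupport F)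
    {γ : ℝ → E} (hγ : Continuous γ) {L : ℝ} (hL : 0 ≤ L) {n : ℕ}
    (hlow : ∀ j < n, ∀ t ∈ Icc 0 L, fiberMoment F j (γ t) = 0) {a b : ℂ} (hb : b ≠ 0)
    (hvan : ∃ᶠ s : ℝ in 𝓝[≠] 0, ∫ t in (0 : ℝ)..L,
      ∫ x : ℝ, Complex.exp (s * (a * t + b * x)) • F (x, γ t) = 0) :
    ∫ t in (0 : ℝ)..L, fiberMoment F n (γ t) = 0 := by
  simp_rw [intervalIntegral.integral_of_le hL, ← integral_Icc_eq_integral_Ioc] at hvan ⊢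
  have hpow : ∫ t in Icc 0 L, ∫ x : ℝ, (a * t + b * x) ^ n • F (x, γ t) = 0 :=
    integral_integral_pow_smul_eq_zero_of_frequently
      (φ := fun p : ℝ × ℝ ↦ a * p.1 + b * p.2) (f := fun p ↦ F (p.2, γ p.1))
      isCompact_Icc (hFc.isCompact.image continuous_fst) (by fun_prop) (by fun_prop)
      (fun t _ hx ↦ apply_eq_zero_of_notMem_fst_image_tsupport hx (γ t)) hvan n
  have hinner : ∀ t ∈ Icc 0 L, ∫ x : ℝ, (a * t + b * x) ^ n • F (x, γ t)
      = b ^ n • fiberMoment F n (γ t) := fun t ht ↦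
    integral_add_mul_pow_smul_of_moment_eq_zero (u := fun x : ℝ ↦ (x : ℂ))
      (fun j _ ↦ Continuous.integrable_of_hasCompactSupport (by fun_prop)
        (hasCompactSupport_slice_fst hFc (γ t)).smul_left)
      (fun j hj ↦ hlow j hj t ht) _ _
  rw [setIntegral_congr_fun measurableSet_Icc hinner, integral_smul] at hpow
  exact (smul_eq_zero_iff_right (pow_ne_zero n hb)).1 hpow

theorem exp_smul_partialFourier {E : Type*} (F : ℝ × E → V) (lam t : ℝ) (y : E) :
    ((Real.exp (-2 * lam * t) : ℝ) : ℂ) • partialFourier F (2 * lam) y =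
      ∫ x : ℝ, Complex.exp (lam * (-2 * t + -2 * Complex.I * x)) • F (x, y) := by
  rw [partialFourier, ← integral_smul]
  congr! 2 with x
  rw [smul_smul, Complex.ofReal_exp, ← Complex.exp_add]
  congr 2
  push_cast
  ring

end FiberMoments

theorem stmt9_general {ι E V : Type*} [TopologicalSpace E] [R1Space E] [NormedAddCommGroup V]
    [NormedSpace ℂ V] [CompleteSpace V] {O : Set E} {F : ℝ × E → V} (hF : Continuous F)
    (hFc : HasCompactSupport F) (γ : ι → ℝ → E) (L : ι → ℝ) (hγ : ∀ i, Continuous (γ i))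
    (hL : ∀ i, 0 ≤ L i) (hγO : ∀ i, ∀ t ∈ Icc 0 (L i), γ i t ∈ O)
    (hinj : ∀ g : E → V, Continuous g → HasCompactSupport g →
      (∀ i, ∫ t in (0 : ℝ)..L i, g (γ i t) = 0) → ∀ y ∈ O, g y = 0)
    (hvan : ∀ i, ∃ᶠ lam : ℝ in 𝓝[≠] 0, ∫ t in (0 : ℝ)..L i,
      ((Real.exp (-2 * lam * t) : ℝ) : ℂ) • partialFourier F (2 * lam) (γ i t) = 0) :
    ∀ x : ℝ, ∀ y ∈ O, F (x, y) = 0 := by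
  simp_rw [exp_smul_partialFourier] at hvan
  have hmoment : ∀ n, ∀ y ∈ O, fiberMoment F n y = 0 := by
    intro n
    induction n using Nat.strong_induction_on with
    | _ n ih =>
      exact hinj _ (continuous_fiberMoment hF hFc n) (hasCompactSupport_fiberMoment hFc n) fun i ↦
        integral_fiberMoment_comp_eq_zero hF hFc (hγ i) (hL i)
          (fun j hj t ht ↦ ih j hj _ (hγO i t ht)) (by simp) (hvan i)
  intro x y hy
  exact congrFun (eq_zero_of_forall_moment_eq_zero (h := fun x ↦ F (x, y)) (by fun_prop)
    (hasCompactSupport_slice_fst hFc y) (fun n ↦ hmoment n y hy)) x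

/-- A parametrized segment `t ↦ base + t • dir`, `0 ≤ t ≤ length`, of unit speed and positive
length, contained in `O`. -/
structure UnitSpeedSegment {E : Type*} [NormedAddCommGroup E] [NormedSpace ℝ E] (O : Set E) where
  base : E
  dir : E
  length : ℝ
  norm_dir : ‖dir‖ = 1
  length_pos : 0 < length
  mem : ∀ t ∈ Icc (0 : ℝ) length, base + t • dir ∈ O

/-- Euclidean analytic core of the local uniqueness theorem: if the local segment
transform is injective on the open set `O ⊆ ℝ^d`, and all attenuated segment integrals
`∫_0^L e^{−2λt} F̂(2λ, x + tθ) dt` over segments contained in `O` vanish for every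
`λ ∈ ℝ`, then the continuous compactly supported function `F` vanishes on `ℝ × O`. -/
theorem stmt9 (d : ℕ) (hd : 1 ≤ d) (O : Set (EuclideanSpace ℝ (Fin d))) (hO : IsOpen O)
    (F : ℝ × EuclideanSpace ℝ (Fin d) → ℂ) (hF : Continuous F) (hFc : HasCompactSupport F)
    (hinj : ∀ g : EuclideanSpace ℝ (Fin d) → ℂ, Continuous g → HasCompactSupport g →
      (∀ (x θ : EuclideanSpace ℝ (Fin d)) (L : ℝ), ‖θ‖ = 1 → 0 < L →
        (∀ t ∈ Set.Icc (0 : ℝ) L, x + t • θ ∈ O) →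
        (∫ t in (0 : ℝ)..L, g (x + t • θ)) = 0) →
      ∀ y ∈ O, g y = 0)
    (hvan : ∀ (lam : ℝ) (x θ : EuclideanSpace ℝ (Fin d)) (L : ℝ), ‖θ‖ = 1 → 0 < L →
      (∀ t ∈ Set.Icc (0 : ℝ) L, x + t • θ ∈ O) →
      (∫ t in (0 : ℝ)..L, ((Real.exp (-2 * lam * t) : ℝ) : ℂ) *
        pFourier d F (2 * lam) (x + t • θ)) = 0) :
    ∀ x₁ : ℝ, ∀ y ∈ O, F (x₁, y) = 0 :=
  stmt9_general hF hFc (fun (σ : UnitSpeedSegment O) t ↦ σ.base + t • σ.dir) (·.length)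
    (fun _ ↦ by fun_prop) (·.length_pos.le) (·.mem)
    (fun g hg hgc h ↦ hinj g hg hgc fun x θ L hθ hL hO ↦ h ⟨x, θ, L, hθ, hL, hO⟩)
    fun σ ↦ .of_forall fun lam ↦ hvan lam _ _ _ σ.norm_dir σ.length_pos σ.mem
end

section
/- Let d ≥ 1, let I ⊆ ℝ be an interval, and let B, C, F : I → M_d(ℝ) be continuous matrix-valued maps with C(t) and F(t) symmetric for every t ∈ I. Suppose H : I → M_d(ℂ) is continuously differentiable, H(t) is complex symmetric with Im H(t) positive definite for every t ∈ I, and H satisfies the matrix Riccati equation H′(t) + B(t) H(t) + H(t) B(t)ᵀ + H(t) C(t) H(t) = F(t) on I. Then for all t₀, t ∈ I: det Im H(t) = det Im H(t₀) · exp( −2 ∫_{t₀}^{t} tr( B(s) + C(s) · Re H(s) ) ds ). -/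
open MeasureTheory Matrix

/-!
Taking imaginary parts in the Riccati equation kills `F`, and `Y = Im H` solves the *linear*
Sylvester equation `Y' = -(B + X C) Y - Y (Bᵀ + C X)` with `X = Re H`. Jacobi's formula turns a
Sylvester equation `Y' = P Y + Y Q` into the scalar equation `(det Y)' = tr (P + Q) · det Y`,
which is solved by the exponential of an integral.
-/

open Set

section Determinant

variable {n : Type*} [Fintype n] [DecidableEq n]

theorem sum_det_updateRow_eq_trace_adjugate_mul {R : Type*} [CommRing R] (M N : Matrix n n R) :
    ∑ i, (M.updateRow i (N i)).det = (M.adjugate * N).trace := by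
  have det_updateRow (i : n) : (M.updateRow i (N i)).det = (N * M.adjugate) i i := by
    rw [← cramer_transpose_apply, cramer_eq_adjugate_mulVec, ← adjugate_transpose,
      mulVec_transpose]
    rfl
  rw [trace_mul_comm, trace]
  exact Finset.sum_congr rfl fun i _ => det_updateRow i

theorem trace_adjugate_mul_add_mul {R : Type*} [CommRing R] (Y P Q : Matrix n n R) :
    (Y.adjugate * (P * Y + Y * Q)).trace = (P + Q).trace * Y.det := by
  have left_term : (Y.adjugate * (P * Y)).trace = P.trace * Y.det := by
    rw [trace_mul_comm, Matrix.mul_assoc, mul_adjugate, Matrix.mul_smul, mul_one, trace_smul,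
      smul_eq_mul, mul_comm]
  have right_term : (Y.adjugate * (Y * Q)).trace = Q.trace * Y.det := by
    rw [← Matrix.mul_assoc, adjugate_mul, Matrix.smul_mul, one_mul, trace_smul, smul_eq_mul,
      mul_comm]
  rw [mul_add, trace_add, left_term, right_term, trace_add, add_mul]

variable {𝕜 : Type*} [NontriviallyNormedField 𝕜] {s : Set 𝕜} {t : 𝕜}

theorem hasDerivWithinAt_det {Y : 𝕜 → Matrix n n 𝕜} {Y' : Matrix n n 𝕜}
    (hY : ∀ i j, HasDerivWithinAt (fun r => Y r i j) (Y' i j) s t) :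
    HasDerivWithinAt (fun r => (Y r).det) ((Y t).adjugate * Y').trace s t := by
  let detRows : ContinuousMultilinearMap 𝕜 (fun _ : n => n → 𝕜) 𝕜 :=
    ⟨detRowAlternating.toMultilinearMap, Continuous.matrix_det continuous_id⟩
  have hYrows : HasDerivWithinAt (fun r i => Y r i) (fun i => Y' i) s t :=
    hasDerivWithinAt_pi.2 fun i => hasDerivWithinAt_pi.2 (hY i)
  refine ((detRows.hasFDerivAt (Y t)).comp_hasDerivWithinAt t hYrows).congr_deriv ?_
  exact (detRows.linearDeriv_apply (Y t) Y').trans <|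
    sum_det_updateRow_eq_trace_adjugate_mul (Y t) Y'

theorem hasDerivWithinAt_det_of_sylvester {Y : 𝕜 → Matrix n n 𝕜} {P Q : Matrix n n 𝕜}
    (hY : ∀ i j, HasDerivWithinAt (fun r => Y r i j) ((P * Y t + Y t * Q) i j) s t) :
    HasDerivWithinAt (fun r => (Y r).det) ((P + Q).trace * (Y t).det) s t :=
  trace_adjugate_mul_add_mul (Y t) P Q ▸ hasDerivWithinAt_det hY

end Determinant

section ImaginaryPart

variable {l m n : Type*}

theorem map_ofReal_map_re (M : Matrix m n ℝ) : (M.map Complex.ofReal).map Complex.re = M := by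
  ext i j
  exact Complex.ofReal_re (M i j)

theorem map_ofReal_map_im (M : Matrix m n ℝ) : (M.map Complex.ofReal).map Complex.im = 0 := by
  ext i j
  exact Complex.ofReal_im (M i j)

variable [Fintype m]

theorem map_re_mul (M : Matrix l m ℂ) (N : Matrix m n ℂ) :
    (M * N).map Complex.re =
      M.map Complex.re * N.map Complex.re - M.map Complex.im * N.map Complex.im := by
  ext i j
  simp [mul_apply, Finset.sum_sub_distrib]

theorem map_im_mul (M : Matrix l m ℂ) (N : Matrix m n ℂ) :
    (M * N).map Complex.im =
      M.map Complex.re * N.map Complex.im + M.map Complex.im * N.map Complex.re := by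
  ext i j
  simp [mul_apply, Finset.sum_add_distrib]

theorem map_im_eq_of_riccati [Fintype n] {A : Matrix n n ℝ} {B : Matrix m m ℝ} {C : Matrix n m ℝ}
    {F : Matrix m n ℝ} {H H' : Matrix m n ℂ}
    (hric : H' + B.map Complex.ofReal * H + H * A.map Complex.ofReal +
      H * C.map Complex.ofReal * H = F.map Complex.ofReal) :
    H'.map Complex.im =
      -(B + H.map Complex.re * C) * H.map Complex.im +
        H.map Complex.im * -(A + C * H.map Complex.re) := by
  have him := congrArg (fun M => M.map Complex.im) hric
  simp only [Matrix.map_add Complex.im Complex.add_im, map_im_mul, map_re_mul, map_ofReal_map_re,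
    map_ofReal_map_im, Matrix.zero_mul, Matrix.mul_zero, add_zero, sub_zero, zero_add] at him
  simp only [Matrix.neg_mul, Matrix.mul_neg, Matrix.add_mul, Matrix.mul_add, ← Matrix.mul_assoc]
  rw [← sub_eq_zero, ← him]
  abel

end ImaginaryPart

section LinearODE

variable {a b : ℝ}

theorem absolutelyContinuousOnInterval_congr {X : Type*} [PseudoMetricSpace X] {f g : ℝ → X}
    (hf : AbsolutelyContinuousOnInterval f a b) (hfg : EqOn f g (uIcc a b)) :
    AbsolutelyContinuousOnInterval g a b := by
  refine Filter.Tendsto.congr' (Filter.eventually_inf_principal.2 (.of_forall fun E hE => ?_)) hf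
  exact Finset.sum_congr rfl fun i hi => by rw [hfg (hE.1 i hi).1, hfg (hE.1 i hi).2]

theorem absolutelyContinuousOnInterval_of_hasDerivWithinAt {f f' : ℝ → ℝ}
    (hf : ∀ x ∈ uIcc a b, HasDerivWithinAt f (f' x) (uIcc a b) x)
    (hf' : IntervalIntegrable f' volume a b) : AbsolutelyContinuousOnInterval f a b := by
  have hftc : EqOn (fun x => f a + ∫ y in a..x, f' y) f (uIcc a b) := by
    intro x hx
    have hsub : uIcc a x ⊆ uIcc a b := uIcc_subset_uIcc_left hx
    have hderiv : ∀ y ∈ uIoo a x, HasDerivAt f (f' y) y := fun y hy =>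
      ((hf y (hsub (Ioo_subset_Icc_self hy))).mono hsub).hasDerivAt (Icc_mem_nhds hy.1 hy.2)
    rw [← eq_sub_iff_add_eq']
    exact intervalIntegral.integral_eq_sub_of_hasDeriv_right
      (fun y hy => (hf y (hsub hy)).continuousWithinAt.mono hsub)
      (fun y hy => (hderiv y hy).hasDerivWithinAt) (hf'.mono_set hsub)
  have hconst : AbsolutelyContinuousOnInterval (fun _ => f a) a b :=
    contDiffOn_const.absolutelyContinuousOnInterval
  exact absolutelyContinuousOnInterval_congr
    (hconst.fun_add (hf'.absolutelyContinuousOnInterval_intervalIntegral left_mem_uIcc)) hftc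

theorem absolutelyContinuousOnInterval_comp_of_locallyLipschitz {V X : Type*}
    [SeminormedAddCommGroup V] [PseudoMetricSpace X] {φ : V → X} {f : ℝ → V}
    (hφ : LocallyLipschitz φ) (hf : AbsolutelyContinuousOnInterval f a b) :
    AbsolutelyContinuousOnInterval (fun x => φ (f x)) a b := by
  obtain ⟨K, hK⟩ := (hφ.locallyLipschitzOn (s := f '' uIcc a b)).exists_lipschitzOnWith_of_compact
    (isCompact_uIcc.image_of_continuousOn hf.continuousOn)
  have hdist {x y : ℝ} (hx : x ∈ uIcc a b) (hy : y ∈ uIcc a b) :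
      dist (φ (f x)) (φ (f y)) ≤ K * dist (f x) (f y) :=
    hK.dist_le_mul _ (mem_image_of_mem f hx) _ (mem_image_of_mem f hy)
  unfold AbsolutelyContinuousOnInterval at hf ⊢
  refine squeeze_zero' (.of_forall fun _ => Finset.sum_nonneg fun _ _ => dist_nonneg) ?_
    (by simpa only [mul_zero] using hf.const_mul (K : ℝ))
  refine Filter.eventually_inf_principal.2 (.of_forall fun E hE => ?_)
  rw [Finset.mul_sum]
  exact Finset.sum_le_sum fun i hi => hdist (hE.1 i hi).1 (hE.1 i hi).2

theorem eq_exp_integral_smul_of_ae_hasDerivAt {E : Type*} [NormedAddCommGroup E] [NormedSpace ℝ E]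
    {f : ℝ → E} {g : ℝ → ℝ} (hf : AbsolutelyContinuousOnInterval f a b)
    (hg : IntervalIntegrable g volume a b)
    (hderiv : ∀ᵐ x, x ∈ uIcc a b → HasDerivAt f (g x • f x) x) :
    f b = Real.exp (∫ x in a..b, g x) • f a := by
  let G : ℝ → ℝ := fun x => ∫ u in a..x, g u
  have hG : AbsolutelyContinuousOnInterval G a b :=
    hg.absolutelyContinuousOnInterval_intervalIntegral left_mem_uIcc
  have hquot : AbsolutelyContinuousOnInterval (fun x => Real.exp (-G x) • f x) a b :=
    (absolutelyContinuousOnInterval_comp_of_locallyLipschitz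
      Real.contDiff_exp.locallyLipschitz hG.fun_neg).fun_smul hf
  have hquot_deriv :
      ∀ᵐ x, x ∈ uIcc a b → HasDerivAt (fun x => Real.exp (-G x) • f x) 0 x := by
    filter_upwards [hderiv, hg.ae_hasDerivAt_integral] with x hfx hGx hx
    refine ((hGx hx a left_mem_uIcc).fun_neg.exp.fun_smul (hfx hx)).congr_deriv ?_
    module
  obtain ⟨c, hc⟩ := hquot.const_of_ae_hasDerivAt_zero hquot_deriv
  have hquot_eq : Real.exp (-G b) • f b = f a := by
    simpa [G] using (hc b right_mem_uIcc).trans (hc a left_mem_uIcc).symm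
  rw [← hquot_eq, smul_smul, ← Real.exp_add, add_neg_cancel, Real.exp_zero, one_smul]

theorem eq_exp_integral_mul_of_hasDerivWithinAt {f g : ℝ → ℝ}
    (hg : IntervalIntegrable g volume a b)
    (hf : ∀ x ∈ uIcc a b, HasDerivWithinAt f (g x * f x) (uIcc a b) x) :
    f b = Real.exp (∫ x in a..b, g x) * f a := by
  have hcont : ContinuousOn f (uIcc a b) := fun x hx => (hf x hx).continuousWithinAt
  have hderiv : ∀ᵐ x, x ∈ uIcc a b → HasDerivAt f (g x * f x) x := by
    filter_upwards [Measure.ae_ne volume (min a b), Measure.ae_ne volume (max a b)]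
      with x hxmin hxmax hx
    exact (hf x hx).hasDerivAt
      (Icc_mem_nhds (lt_of_le_of_ne' hx.1 hxmin) (lt_of_le_of_ne hx.2 hxmax))
  exact eq_exp_integral_smul_of_ae_hasDerivAt
    (absolutelyContinuousOnInterval_of_hasDerivWithinAt hf (hg.mul_continuousOn hcont)) hg hderiv

end LinearODE

section Riccati

variable {n : Type*} [Fintype n]

theorem continuousOn_trace_add_mul_map_re {X : Type*} [TopologicalSpace X] {s : Set X}
    {B C : X → Matrix n n ℝ} {H : X → Matrix n n ℂ} (hB : ContinuousOn B s)
    (hC : ContinuousOn C s) (hH : ∀ i j, ContinuousOn (fun x => H x i j) s) :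
    ContinuousOn (fun x => (B x + C x * (H x).map Complex.re).trace) s := by
  have hre : ContinuousOn (fun x => (H x).map Complex.re) s :=
    continuousOn_pi.2 fun i => continuousOn_pi.2 fun j =>
      Complex.continuous_re.comp_continuousOn (hH i j)
  exact continuous_id.matrix_trace.comp_continuousOn (hB.add (hC.mul hre))

variable [DecidableEq n]

theorem hasDerivWithinAt_det_map_im_of_riccati {s : Set ℝ} {t : ℝ} {B C F : Matrix n n ℝ}
    {H : ℝ → Matrix n n ℂ} {H' : Matrix n n ℂ}
    (hH : ∀ i j, HasDerivWithinAt (fun r => H r i j) (H' i j) s t)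
    (hric : H' + B.map Complex.ofReal * H t + H t * Bᵀ.map Complex.ofReal +
      H t * C.map Complex.ofReal * H t = F.map Complex.ofReal) :
    HasDerivWithinAt (fun r => ((H r).map Complex.im).det)
      (-2 * (B + C * (H t).map Complex.re).trace * ((H t).map Complex.im).det) s t := by
  have him (i j : n) : HasDerivWithinAt (fun r => (H r).map Complex.im i j)
      (H'.map Complex.im i j) s t :=
    Complex.imCLM.hasFDerivAt.comp_hasDerivWithinAt t (hH i j)
  rw [map_im_eq_of_riccati hric] at him
  refine (hasDerivWithinAt_det_of_sylvester him).congr_deriv ?_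
  simp only [trace_add, trace_neg, trace_transpose, trace_mul_comm _ C]
  ring

theorem stmt10_general {I : Set ℝ} (hI : I.OrdConnected) {B C F : ℝ → Matrix n n ℝ}
    {H H' : ℝ → Matrix n n ℂ}
    (hH : ∀ t ∈ I, ∀ i j, HasDerivWithinAt (fun s => H s i j) (H' t i j) I t)
    (hric : ∀ t ∈ I,
      H' t + (B t).map Complex.ofReal * H t + H t * ((B t)ᵀ).map Complex.ofReal +
        H t * (C t).map Complex.ofReal * H t = (F t).map Complex.ofReal)
    {t₀ t : ℝ} (ht₀ : t₀ ∈ I) (ht : t ∈ I)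
    (hint : IntervalIntegrable (fun s => (B s + C s * (H s).map Complex.re).trace) volume t₀ t) :
    ((H t).map Complex.im).det =
      ((H t₀).map Complex.im).det *
        Real.exp (-2 * ∫ s in t₀..t, (B s + C s * (H s).map Complex.re).trace) := by
  have hsub : uIcc t₀ t ⊆ I := hI.uIcc_subset ht₀ ht
  have hderiv := fun s (hs : s ∈ uIcc t₀ t) =>
    (hasDerivWithinAt_det_map_im_of_riccati (hH s (hsub hs)) (hric s (hsub hs))).mono hsub
  rw [eq_exp_integral_mul_of_hasDerivWithinAt (hint.const_mul (-2)) hderiv,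
    intervalIntegral.integral_const_mul, mul_comm]

end Riccati

/-- Determinant evolution law for solutions of the matrix Riccati equation
`H' + BH + HBᵀ + HCH = F` with `H` complex symmetric and `Im H` positive definite:
`det Im H(t) = det Im H(t₀) · exp(−2∫_{t₀}^t tr(B(s) + C(s)·Re H(s)) ds)`. -/
theorem stmt10 (d : ℕ) (hd : 1 ≤ d) (I : Set ℝ) (hI : I.OrdConnected)
    (B C F : ℝ → Matrix (Fin d) (Fin d) ℝ)
    (hB : ContinuousOn B I) (hC : ContinuousOn C I) (hF : ContinuousOn F I)
    (hCs : ∀ t ∈ I, (C t).IsSymm) (hFs : ∀ t ∈ I, (F t).IsSymm)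
    (H H' : ℝ → Matrix (Fin d) (Fin d) ℂ)
    (hH : ∀ t ∈ I, ∀ i j : Fin d, HasDerivWithinAt (fun s => H s i j) (H' t i j) I t)
    (hH' : ContinuousOn H' I)
    (hHs : ∀ t ∈ I, (H t).IsSymm)
    (hHp : ∀ t ∈ I, ((H t).map Complex.im).PosDef)
    (hric : ∀ t ∈ I,
      H' t + (B t).map Complex.ofReal * H t + H t * ((B t)ᵀ).map Complex.ofReal +
        H t * (C t).map Complex.ofReal * H t = (F t).map Complex.ofReal) :
    ∀ t₀ ∈ I, ∀ t ∈ I,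
      ((H t).map Complex.im).det =
        ((H t₀).map Complex.im).det *
          Real.exp (-2 * ∫ s in t₀..t, Matrix.trace (B s + C s * (H s).map Complex.re)) := by
  intro t₀ ht₀ t ht
  have hcont := continuousOn_trace_add_mul_map_re hB hC fun i j s hs =>
    (hH s hs i j).continuousWithinAt
  exact stmt10_general hI hH hric ht₀ ht (hcont.mono (hI.uIcc_subset ht₀ ht)).intervalIntegrable
end
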